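/- arXiv:1310.7857 — 3 statements merged into one kernel-verified Lean document; each statement's English description precedes it below -/
import Mathlib

section
/- Let (G_n)_{n≥0} be a filtration on a probability space (Ω, F, P) and let (X_n)_{n≥0} be a discrete-parameter d-dimensional process adapted to (G_n)_{n≥0}; write ξ_n := X_n − X_{n−1} for n ≥ 1. Assume that: (i) for every n ≥ 1, almost surely 0 belongs to the relative interior of the convex hull of the support of the regular conditional law of ξ_n given G_{n−1}; (ii) the indicators 1_{{ξ_n = 0}} increase to 1 almost surely as n → ∞; (iii) for every n ≥ 2, P[ξ_n = 0 | G_{n−1}] > 0 almost surely on the event {ξ_{n−1} ≠ 0}. Then there exists a probability measure Q equivalent to P such that X is a Q-martingale and (X_n)_{n≥0} is bounded in L²(Q). -/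
open MeasureTheory Set Filter ProbabilityTheory

noncomputable section

/-- The (topological) support of a measure: the set of points all of whose open
neighbourhoods have positive measure. This is the smallest closed set of full measure. -/
def msupport {E : Type*} [TopologicalSpace E] [MeasurableSpace E] (ν : Measure E) : Set E :=
  {x | ∀ U : Set E, IsOpen U → x ∈ U → 0 < ν U}

/-!
If `0` lies in the relative interior of the convex hull of the support of a law `π`, then a linear
functional that is `π`-a.s. nonpositive vanishes `π`-a.s. Once `π` has been multiplied by
`exp (-‖x‖²)`, this makes the Laplace transform `l ↦ ∫ exp (l x) π(dx)` coercive modulo the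
functionals vanishing `π`-a.s., so it attains its minimum, and the exponential tilt by a minimiser
is centred. The tilt depends measurably on `π` without any measurable selection of the minimiser:
along a sequence `s n` of near-minimisers with summable errors, `exp (s n x)` converges `π`-a.e.

Tilting every conditional law makes `X` a martingale. To keep control as `n → ∞`, whenever the
conditional law of the `n`-th increment has an atom at `0`, its tilt is mixed with `δ₀` until both
the mass off `0` and the second moment are at most `4⁻ⁿ`. Increments are absorbed at `0`, so the
product of the one-step densities is almost surely eventually constant, and no mass is lost in the
limit since the mass of `{ξ n ≠ 0}` tends to `0`. A `𝒢 0`-measurable weight makes `X 0` and the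
first increment square-integrable; the `L²` norms of the other increments are summable.
-/

open scoped ENNReal NNReal Topology

theorem eq_zero_of_forall_nonpos_of_zero_mem_intrinsicInterior {E : Type*} [AddCommGroup E]
    [Module ℝ E] [TopologicalSpace E] [ContinuousSMul ℝ E] {C : Set E}
    (h0 : (0 : E) ∈ intrinsicInterior ℝ C) (l : E →ₗ[ℝ] ℝ) (hl : ∀ x ∈ C, l x ≤ 0)
    {x : E} (hx : x ∈ C) : l x = 0 := by
  obtain ⟨⟨_, h0_span⟩, h0_int, rfl⟩ := h0
  have smul_mem (t : ℝ) : t • x ∈ affineSpan ℝ C := by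
    simpa [AffineMap.lineMap_apply] using
      AffineMap.lineMap_mem t h0_span (subset_affineSpan ℝ C hx)
  have h_cont : Continuous fun t : ℝ => (⟨t • x, smul_mem t⟩ : affineSpan ℝ C) := by fun_prop
  have h_nhds : ∀ᶠ t : ℝ in 𝓝 0, t • x ∈ C :=
    (h_cont.tendsto' 0 ⟨0, h0_span⟩ (by simp)) (mem_interior_iff_mem_nhds.1 h0_int)
  obtain ⟨t, ht_mem, ht_neg⟩ :=
    ((h_nhds.filter_mono nhdsWithin_le_nhds).and (self_mem_nhdsWithin (s := Iio 0))).exists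
  have h_neg : t * l x ≤ 0 := by simpa using hl _ ht_mem
  exact le_antisymm (hl x hx) (nonneg_of_mul_nonpos_right h_neg ht_neg)

theorem msupport_eq_support {E : Type*} [TopologicalSpace E] [MeasurableSpace E]
    (ν : Measure E) : msupport ν = ν.support := by
  ext x
  simp only [msupport, Measure.support_eq_forall_isOpen, mem_ofPred_eq]
  exact forall_congr' fun U => forall_comm

/-- `π` admits no one-period arbitrage: a linear functional that is almost surely nonpositive
vanishes almost surely. -/
def NoArbitrage {E : Type*} [NormedAddCommGroup E] [NormedSpace ℝ E] [MeasurableSpace E]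
    (π : Measure E) : Prop :=
  ∀ l : StrongDual ℝ E, (∀ᵐ x ∂π, l x ≤ 0) → ∀ᵐ x ∂π, l x = 0

section NoArbitrage

variable {E : Type*} [NormedAddCommGroup E] [NormedSpace ℝ E] [MeasurableSpace E]

theorem NoArbitrage.of_absolutelyContinuous {π π' : Measure E} (h : NoArbitrage π) (h₁ : π ≪ π')
    (h₂ : π' ≪ π) : NoArbitrage π' :=
  fun l hl => h₂.ae_le (h l (h₁.ae_le hl))

theorem noArbitrage_of_zero_mem_intrinsicInterior [HereditarilyLindelofSpace E] {π : Measure E}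
    (h : (0 : E) ∈ intrinsicInterior ℝ (convexHull ℝ (msupport π))) : NoArbitrage π := by
  rw [msupport_eq_support] at h
  intro l hl
  have h_support : π.support ⊆ {x | l x ≤ 0} :=
    Measure.support_subset_of_isClosed (isClosed_le l.continuous continuous_const) hl
  have h_hull : convexHull ℝ π.support ⊆ {x | l x ≤ 0} :=
    convexHull_min h_support (convex_halfSpace_le l.isBoundedLinearMap.toIsLinearMap 0)
  filter_upwards [Measure.support_mem_ae (μ := π)] with x hx
  exact eq_zero_of_forall_nonpos_of_zero_mem_intrinsicInterior h l.toLinearMap h_hull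
    (subset_convexHull ℝ _ hx)

end NoArbitrage

theorem exists_pos_forall_mul_norm_le {M : Type*} [NormedAddCommGroup M] [NormedSpace ℝ M]
    [ProperSpace M] {f : M → ℝ} (hf_cont : Continuous f)
    (hf_smul : ∀ c : ℝ, 0 ≤ c → ∀ v, f (c • v) = c * f v) (hf_pos : ∀ v ≠ 0, 0 < f v) :
    ∃ c > 0, ∀ v, c * ‖v‖ ≤ f v := by
  have hf_zero : f 0 = 0 := by simpa using hf_smul 0 le_rfl 0
  cases subsingleton_or_nontrivial M
  · exact ⟨1, one_pos, fun v => by simp [Subsingleton.elim v 0, hf_zero]⟩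
  obtain ⟨u, hu, hu_min⟩ := (isCompact_sphere (0 : M) 1).exists_isMinOn
    (NormedSpace.sphere_nonempty.2 zero_le_one) hf_cont.continuousOn
  refine ⟨f u, hf_pos u (ne_zero_of_mem_unit_sphere ⟨u, hu⟩), fun v => ?_⟩
  rcases eq_or_ne v 0 with rfl | hv
  · simp [hf_zero]
  have hv_norm : 0 < ‖v‖ := norm_pos_iff.2 hv
  have hv_sphere : ‖v‖⁻¹ • v ∈ Metric.sphere (0 : M) 1 := by
    simp [norm_smul, hv_norm.ne']
  calc f u * ‖v‖ ≤ f (‖v‖⁻¹ • v) * ‖v‖ := by gcongr; exact hu_min hv_sphere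
    _ = f v := by rw [hf_smul _ (by positivity)]; field_simp

/-- All exponential moments of the norm under `π` are finite. -/
def HasExpMoments {E : Type*} [NormedAddCommGroup E] [MeasurableSpace E] (π : Measure E) : Prop :=
  ∀ c : ℝ, Integrable (fun x => Real.exp (c * ‖x‖)) π

/-- The Laplace transform `l ↦ ∫ exp (l x) π(dx)` of `π`, as a function of the functional `l`. -/
def laplace {E : Type*} [NormedAddCommGroup E] [NormedSpace ℝ E] [MeasurableSpace E]
    (π : Measure E) (l : StrongDual ℝ E) : ℝ :=
  ∫ x, Real.exp (l x) ∂π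

/-- The mean positive part `l ↦ ∫ (l x)⁺ π(dx)`, a positively homogeneous lower bound of
`laplace π`. -/
def meanPosPart {E : Type*} [NormedAddCommGroup E] [NormedSpace ℝ E] [MeasurableSpace E]
    (π : Measure E) (l : StrongDual ℝ E) : ℝ :=
  ∫ x, max (l x) 0 ∂π

section ExponentialMoments

variable {E : Type*} [NormedAddCommGroup E] [MeasurableSpace E] {π : Measure E}

namespace HasExpMoments

theorem memLp_id [BorelSpace E] [SecondCountableTopology E] (h : HasExpMoments π) (p : ℝ≥0) :
    MemLp id p π := by
  have h_univ : integrableExpSet norm π = univ := eq_univ_of_forall h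
  have h_norm : MemLp (fun x : E => ‖x‖) p π :=
    memLp_of_mem_interior_integrableExpSet (by simp [h_univ]) p
  exact (memLp_norm_iff measurable_id.aestronglyMeasurable).1 h_norm

theorem integrable_id [BorelSpace E] [SecondCountableTopology E] (h : HasExpMoments π) :
    Integrable id π :=
  memLp_one_iff_integrable.1 (h.memLp_id 1)

variable [NormedSpace ℝ E]

theorem integrable_exp_add_mul_norm [BorelSpace E] (h : HasExpMoments π) (l : StrongDual ℝ E)
    (c : ℝ) : Integrable (fun x => Real.exp (l x + c * ‖x‖)) π := by
  refine (h (‖l‖ + c)).mono' (by fun_prop) (ae_of_all _ fun x => ?_)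
  have h_le : l x ≤ ‖l‖ * ‖x‖ := (le_abs_self _).trans (l.le_opNorm x)
  rw [Real.norm_of_nonneg (Real.exp_pos _).le, add_mul]
  gcongr

theorem integrable_exp [BorelSpace E] (h : HasExpMoments π) (l : StrongDual ℝ E) :
    Integrable (fun x => Real.exp (l x)) π := by
  simpa using h.integrable_exp_add_mul_norm l 0

theorem tilted [BorelSpace E] (h : HasExpMoments π) (l : StrongDual ℝ E) :
    HasExpMoments (π.tilted l) := by
  intro c
  rw [integrable_tilted_iff (h.integrable_exp l)]
  simpa [← Real.exp_add] using h.integrable_exp_add_mul_norm l c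

theorem convexOn_laplace [BorelSpace E] (h : HasExpMoments π) :
    ConvexOn ℝ univ (laplace π) :=
  integral_convexOn_of_integrand_ae convex_univ
    (ae_of_all _ fun x => convexOn_exp.comp_linearMap
      (ContinuousLinearMap.apply ℝ ℝ x : StrongDual ℝ E →L[ℝ] ℝ).toLinearMap)
    fun l _ => h.integrable_exp l

theorem integrable_posPart [BorelSpace E] [SecondCountableTopology E] (h : HasExpMoments π)
    (l : StrongDual ℝ E) : Integrable (fun x => max (l x) 0) π :=
  (l.integrable_comp h.integrable_id).pos_part

theorem convexOn_meanPosPart [BorelSpace E] [SecondCountableTopology E] (h : HasExpMoments π) :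
    ConvexOn ℝ univ (meanPosPart π) :=
  integral_convexOn_of_integrand_ae convex_univ
    (ae_of_all _ fun x => ((LinearMap.convexOn
      (ContinuousLinearMap.apply ℝ ℝ x : StrongDual ℝ E →L[ℝ] ℝ).toLinearMap convex_univ).sup
        (convexOn_const 0 convex_univ)))
    fun l _ => h.integrable_posPart l

theorem meanPosPart_le_laplace [BorelSpace E] [SecondCountableTopology E] (h : HasExpMoments π)
    (l : StrongDual ℝ E) : meanPosPart π l ≤ laplace π l :=
  integral_mono (h.integrable_posPart l) (h.integrable_exp l) fun x =>
    max_le (by linarith [Real.add_one_le_exp (l x)]) (Real.exp_pos _).le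

theorem continuous_laplace [FiniteDimensional ℝ E] [BorelSpace E] (h : HasExpMoments π) :
    Continuous (laplace π) :=
  continuousOn_univ.1 (h.convexOn_laplace.continuousOn isOpen_univ)

theorem continuous_meanPosPart [FiniteDimensional ℝ E] [BorelSpace E] (h : HasExpMoments π) :
    Continuous (meanPosPart π) :=
  continuousOn_univ.1 (h.convexOn_meanPosPart.continuousOn isOpen_univ)

theorem meanPosPart_pos [BorelSpace E] [SecondCountableTopology E] (h : HasExpMoments π)
    (h_na : NoArbitrage π) {l : StrongDual ℝ E} (hl : ¬ ∀ᵐ x ∂π, l x = 0) :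
    0 < meanPosPart π l := by
  refine (integral_nonneg fun x => le_max_right _ _).lt_of_ne fun h_eq => hl (h_na l ?_)
  filter_upwards [(integral_eq_zero_iff_of_nonneg (fun x => le_max_right _ _)
    (h.integrable_posPart l)).1 h_eq.symm] with x hx
  exact max_eq_right_iff.1 hx

end HasExpMoments

variable [NormedSpace ℝ E]

theorem meanPosPart_smul {c : ℝ} (hc : 0 ≤ c) (l : StrongDual ℝ E) :
    meanPosPart π (c • l) = c * meanPosPart π l := by
  simp only [meanPosPart, ← integral_const_mul, mul_max_of_nonneg _ _ hc, mul_zero,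
    smul_apply, smul_eq_mul]

/-- The functionals vanishing `π`-almost everywhere. -/
def nullFunctionals (π : Measure E) : Submodule ℝ (StrongDual ℝ E) where
  carrier := {l | ∀ᵐ x ∂π, l x = 0}
  zero_mem' := by simp
  add_mem' {l l'} hl hl' := by
    simp only [mem_ofPred_eq] at hl hl' ⊢
    filter_upwards [hl, hl'] with x hx hx'
    simp [hx, hx']
  smul_mem' c l hl := by
    simp only [mem_ofPred_eq] at hl ⊢
    filter_upwards [hl] with x hx
    simp [hx]

theorem laplace_add_of_mem_nullFunctionals {l' : StrongDual ℝ E} (hl' : l' ∈ nullFunctionals π)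
    (l : StrongDual ℝ E) : laplace π (l' + l) = laplace π l := by
  refine integral_congr_ae ?_
  filter_upwards [hl'] with x hx
  simp [hx]

theorem HasExpMoments.exists_forall_laplace_le [FiniteDimensional ℝ E] [BorelSpace E]
    (h : HasExpMoments π) (h_na : NoArbitrage π) :
    ∃ l, ∀ l', laplace π l ≤ laplace π l' := by
  obtain ⟨M, hM⟩ := (nullFunctionals π).exists_isCompl
  obtain ⟨c, hc, hc_le⟩ := exists_pos_forall_mul_norm_le (M := M)
    (f := fun v => meanPosPart π v) (h.continuous_meanPosPart.comp continuous_subtype_val)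
    (fun c hc v => meanPosPart_smul hc (v : StrongDual ℝ E))
    (fun v hv => h.meanPosPart_pos h_na fun hv_null =>
      hv (Subtype.ext (Submodule.disjoint_def.1 hM.disjoint v hv_null v.2)))
  have h_coercive : Tendsto (fun v : M => laplace π v) (cocompact M) atTop :=
    tendsto_atTop_mono (fun v => (hc_le v).trans (h.meanPosPart_le_laplace v))
      ((tendsto_norm_cocompact_atTop (E := M)).const_mul_atTop hc)
  obtain ⟨l, hl⟩ := (h.continuous_laplace.comp continuous_subtype_val).exists_forall_le h_coercive
  refine ⟨l, fun l' => ?_⟩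
  obtain ⟨v, hv, w, hw, rfl⟩ := Submodule.mem_sup.1 (hM.sup_eq_top ▸ Submodule.mem_top (x := l'))
  rw [laplace_add_of_mem_nullFunctionals hv]
  exact hl ⟨w, hw⟩

theorem HasExpMoments.integral_id_eq_zero [CompleteSpace E] [SecondCountableTopology E]
    [BorelSpace E] (h : HasExpMoments π) (h_min : ∀ l, laplace π 0 ≤ laplace π l) :
    ∫ x, x ∂π = 0 := by
  refine SeparatingDual.eq_zero_of_forall_dual_eq_zero (R := ℝ) fun l => ?_
  have hl_univ : integrableExpSet l π = univ := eq_univ_of_forall fun t => by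
    simpa [integrableExpSet] using h.integrable_exp (t • l)
  have h_mgf_min : IsLocalMin (mgf l π) 0 := Eventually.of_forall fun t => by
    simpa [mgf, laplace] using h_min (t • l)
  calc l (∫ x, x ∂π) = ∫ x, l x ∂π := (l.integral_comp_comm h.integrable_id).symm
    _ = deriv (mgf l π) 0 := (deriv_mgf_zero (by simp [hl_univ])).symm
    _ = 0 := h_mgf_min.deriv_eq_zero

theorem HasExpMoments.integral_tilted_eq_zero [CompleteSpace E] [SecondCountableTopology E]
    [BorelSpace E] (h : HasExpMoments π) {l : StrongDual ℝ E}
    (hl : ∀ l', laplace π l ≤ laplace π l') : ∫ x, x ∂(π.tilted l) = 0 := by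
  have h_laplace (l' : StrongDual ℝ E) :
      laplace (π.tilted l) l' = laplace π (l + l') / laplace π l :=
    integral_exp_tilted _ _
  refine (h.tilted l).integral_id_eq_zero fun l' => ?_
  rw [h_laplace, h_laplace, add_zero]
  exact div_le_div_of_nonneg_right (hl _) (integral_nonneg fun x => (Real.exp_pos _).le)

end ExponentialMoments

theorem ae_tendsto_zero_of_tsum_lintegral_ne_top {α : Type*} [MeasurableSpace α] {π : Measure α}
    {f : ℕ → α → ℝ≥0∞} (hf : ∀ n, AEMeasurable (f n) π) (h : ∑' n, ∫⁻ x, f n x ∂π ≠ ∞) :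
    ∀ᵐ x ∂π, Tendsto (fun n => f n x) atTop (𝓝 0) := by
  rw [← lintegral_tsum hf] at h
  filter_upwards [ae_lt_top' (.tsum hf) h] with x hx
  exact ENNReal.tendsto_atTop_zero_of_tsum_ne_top hx.ne

section NearMinimizers

variable {E : Type*} [NormedAddCommGroup E] [NormedSpace ℝ E] [MeasurableSpace E] [BorelSpace E]
  {π : Measure E}

theorem HasExpMoments.lintegral_sq_sub_exp_half_le (h : HasExpMoments π) {l : StrongDual ℝ E}
    (hl : ∀ l', laplace π l ≤ laplace π l') (l' : StrongDual ℝ E) :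
    ∫⁻ x, ENNReal.ofReal ((Real.exp (l' x / 2) - Real.exp (l x / 2)) ^ 2) ∂π ≤
      ENNReal.ofReal (laplace π l' - laplace π l) := by
  set mid : StrongDual ℝ E := (2⁻¹ : ℝ) • (l' + l) with mid_def
  have h_expand (x : E) : (Real.exp (l' x / 2) - Real.exp (l x / 2)) ^ 2 =
      Real.exp (l' x) + Real.exp (l x) - 2 * Real.exp (mid x) := by
    have h_mid : mid x = l' x / 2 + l x / 2 := by
      simp only [mid_def, smul_apply, add_apply, smul_eq_mul]
      ring
    rw [h_mid, Real.exp_add, ← add_halves (l' x), ← add_halves (l x), Real.exp_add, Real.exp_add]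
    simp only [add_halves]
    ring
  have h_int_add : Integrable (fun x => Real.exp (l' x) + Real.exp (l x)) π :=
    (h.integrable_exp l').add (h.integrable_exp l)
  have h_int_mid : Integrable (fun x => 2 * Real.exp (mid x)) π :=
    (h.integrable_exp mid).const_mul 2
  have h_eq : ∫ x, (Real.exp (l' x / 2) - Real.exp (l x / 2)) ^ 2 ∂π =
      laplace π l' + laplace π l - 2 * laplace π mid := by
    simp_rw [h_expand]
    rw [integral_sub h_int_add h_int_mid,
      integral_add (h.integrable_exp l') (h.integrable_exp l), integral_const_mul]
    rfl
  rw [← ofReal_integral_eq_lintegral_ofReal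
    (by simpa only [h_expand] using! h_int_add.sub h_int_mid) (ae_of_all _ fun x => sq_nonneg _),
    h_eq]
  -- The cross term of the square is the value at the midpoint, where minimality applies.
  exact ENNReal.ofReal_le_ofReal (by linarith [hl mid])

theorem HasExpMoments.ae_tendsto_exp (h : HasExpMoments π) {l : StrongDual ℝ E}
    (hl : ∀ l', laplace π l ≤ laplace π l') {s : ℕ → StrongDual ℝ E} {ε : ℕ → ℝ}
    (hε : Summable ε) (hs : ∀ n, laplace π (s n) ≤ laplace π l + ε n) :
    ∀ᵐ x ∂π, Tendsto (fun n => Real.exp (s n x)) atTop (𝓝 (Real.exp (l x))) := by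
  have h_sum : ∑' n, ∫⁻ x, ENNReal.ofReal ((Real.exp (s n x / 2) - Real.exp (l x / 2)) ^ 2) ∂π
      ≠ ∞ := by
    refine ne_top_of_le_ne_top hε.tsum_ofReal_ne_top (ENNReal.tsum_le_tsum fun n => ?_)
    exact (h.lintegral_sq_sub_exp_half_le hl (s n)).trans
      (ENNReal.ofReal_le_ofReal (by linarith [hs n]))
  filter_upwards [ae_tendsto_zero_of_tsum_lintegral_ne_top (fun n => by fun_prop) h_sum] with x hx
  have h_sq : Tendsto (fun n => (Real.exp (s n x / 2) - Real.exp (l x / 2)) ^ 2) atTop (𝓝 0) := by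
    simpa [Function.comp_def, ENNReal.toReal_ofReal, sq_nonneg] using
      (ENNReal.tendsto_toReal (by simp)).comp hx
  have h_half : Tendsto (fun n => Real.exp (s n x / 2)) atTop (𝓝 (Real.exp (l x / 2))) := by
    refine tendsto_sub_nhds_zero_iff.1 ((tendsto_zero_iff_abs_tendsto_zero _).2 ?_)
    simpa [Real.sqrt_sq_eq_abs, Function.comp_def] using h_sq.sqrt
  simpa [← Real.exp_nat_mul, mul_div_cancel₀] using h_half.pow 2

end NearMinimizers

section MeasurableSelection

theorem exists_measurable_forall_lt_add {Ω Y : Type*} [MeasurableSpace Ω] [TopologicalSpace Y]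
    [TopologicalSpace.SeparableSpace Y] [Nonempty Y] [MeasurableSpace Y] {F : Ω → Y → ℝ}
    (hF_meas : ∀ y, Measurable fun ω => F ω y) (hF_cont : ∀ ω, Continuous (F ω))
    (hF_bdd : ∀ ω, BddBelow (range (F ω))) {ε : ℝ} (hε : 0 < ε) :
    ∃ s : Ω → Y, Measurable s ∧ ∀ ω y, F ω (s ω) < F ω y + ε := by
  classical
  let u : ℕ → Y := TopologicalSpace.denseSeq Y
  let I : Ω → ℝ := fun ω => ⨅ n, F ω (u n)
  have hI_meas : Measurable I := .iInf fun n => hF_meas (u n)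
  have hI_bdd (ω : Ω) : BddBelow (range fun n => F ω (u n)) :=
    (hF_bdd ω).mono (range_comp_subset_range u (F ω))
  have hI_le (ω : Ω) (y : Y) : I ω ≤ F ω y :=
    (TopologicalSpace.denseRange_denseSeq Y).induction_on y
      (isClosed_le continuous_const (hF_cont ω)) fun n => ciInf_le (hI_bdd ω) n
  have h_exists (ω : Ω) : ∃ n, F ω (u n) < I ω + ε :=
    exists_lt_of_ciInf_lt (lt_add_of_pos_right _ hε)
  refine ⟨fun ω => u (Nat.find (h_exists ω)), measurable_from_top.comp (measurable_find h_exists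
    fun n => measurableSet_lt (hF_meas (u n)) (hI_meas.add_const ε)), fun ω y => ?_⟩
  exact (Nat.find_spec (h_exists ω)).trans_le (by gcongr; exact hI_le ω y)

variable {Ω E : Type*} [MeasurableSpace Ω] [NormedAddCommGroup E] [NormedSpace ℝ E]
  [FiniteDimensional ℝ E] [MeasurableSpace E] [BorelSpace E]

theorem exists_measurable_ae_eq_exp_minimizer (π : Kernel Ω E) (hπ : ∀ ω, HasExpMoments (π ω)) :
    ∃ h : Ω → E → ℝ≥0∞, Measurable (Function.uncurry h) ∧
      ∀ ω l, (∀ l', laplace (π ω) l ≤ laplace (π ω) l') →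
        h ω =ᵐ[π ω] fun x => ENNReal.ofReal (Real.exp (l x)) := by
  have h_near (n : ℕ) := exists_measurable_forall_lt_add (F := fun ω => laplace (π ω))
    (fun l => (StronglyMeasurable.integral_kernel
      (by fun_prop : Measurable fun x => Real.exp (l x)).stronglyMeasurable).measurable)
    (fun ω => (hπ ω).continuous_laplace)
    (fun ω => ⟨0, forall_mem_range.2 fun l => integral_nonneg fun x => (Real.exp_pos _).le⟩)
    (ε := (1 / 2) ^ n) (by positivity)
  choose s hs_meas hs_lt using h_near
  refine ⟨fun ω x => limsup (fun n => ENNReal.ofReal (Real.exp (s n ω x))) atTop, ?_, ?_⟩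
  · refine .limsup fun n => ?_
    have h_eval : Measurable fun p : StrongDual ℝ E × E => p.1 p.2 := by fun_prop
    have h_arg : Measurable fun q : Ω × E => (s n q.1, q.2) := by fun_prop
    exact (h_eval.comp h_arg).exp.ennreal_ofReal
  · intro ω l hl
    filter_upwards [(hπ ω).ae_tendsto_exp hl summable_geometric_two
      fun n => (hs_lt n ω l).le] with x hx
    exact (ENNReal.tendsto_ofReal hx).limsup_eq

theorem exists_measurable_withDensity_eq_tilted (π : Kernel Ω E) [IsSFiniteKernel π]
    (hπ : ∀ ω, HasExpMoments (π ω)) :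
    ∃ z : Ω → E → ℝ≥0∞, Measurable (Function.uncurry z) ∧
      ∀ ω l, (∀ l', laplace (π ω) l ≤ laplace (π ω) l') →
        (π ω).withDensity (z ω) = (π ω).tilted l := by
  obtain ⟨h, h_meas, h_eq⟩ := exists_measurable_ae_eq_exp_minimizer π hπ
  refine ⟨fun ω x => h ω x / ∫⁻ y, h ω y ∂π ω,
    h_meas.div (h_meas.lintegral_kernel_prod_right.comp measurable_fst), fun ω l hl => ?_⟩
  rcases eq_zero_or_neZero (π ω) with h_zero | _
  · simp [h_zero]
  refine withDensity_congr_ae ?_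
  filter_upwards [h_eq ω l hl] with x hx
  rw [hx, lintegral_congr_ae (h_eq ω l hl), ← ofReal_integral_eq_lintegral_ofReal
    ((hπ ω).integrable_exp l) (ae_of_all _ fun x => (Real.exp_pos _).le),
    ENNReal.ofReal_div_of_pos (integral_exp_pos ((hπ ω).integrable_exp l))]

end MeasurableSelection

theorem eLpNorm_two_sq_eq_lintegral_enorm_sq {α F : Type*} [MeasurableSpace α]
    [NormedAddCommGroup F] {ν : Measure α} (f : α → F) :
    eLpNorm f 2 ν ^ 2 = ∫⁻ x, ‖f x‖ₑ ^ 2 ∂ν := by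
  simpa using eLpNorm_nnreal_pow_eq_lintegral (μ := ν) (f := f) (p := 2) two_ne_zero

theorem memLp_two_iff_lintegral_enorm_sq_ne_top {α F : Type*} [MeasurableSpace α]
    [NormedAddCommGroup F] {ν : Measure α} {f : α → F} (hf : AEStronglyMeasurable f ν) :
    MemLp f 2 ν ↔ ∫⁻ x, ‖f x‖ₑ ^ 2 ∂ν ≠ ∞ := by
  rw [← eLpNorm_two_sq_eq_lintegral_enorm_sq, ENNReal.pow_ne_top_iff, MemLp]
  simp [hf, lt_top_iff_ne_top]

/-- `z` is a density turning `ν` into an equivalent centred probability measure with a second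
moment. Finiteness of `z` is not recorded: it holds `ν`-almost everywhere by integrability. -/
structure IsCenteringDensity {E : Type*} [NormedAddCommGroup E] [NormedSpace ℝ E]
    [MeasurableSpace E] (ν : Measure E) (z : E → ℝ≥0∞) : Prop where
  ae_ne_zero : ∀ᵐ x ∂ν, z x ≠ 0
  isProbabilityMeasure : IsProbabilityMeasure (ν.withDensity z)
  lintegral_enorm_sq_ne_top : ∫⁻ x, ‖x‖ₑ ^ 2 ∂(ν.withDensity z) ≠ ∞
  integral_eq_zero : ∫ x, x ∂(ν.withDensity z) = 0

/-- The density of the mixture `a • ρ + (1 - a) • δ₀` with respect to `ν`, where `z` is the density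
of `ρ` and `0` is an atom of `ν`. For `a = 1` it is `z`, whether or not `0` is an atom, because
`0 * ∞ = 0`. -/
def mixAtomZero {E : Type*} [Zero E] [MeasurableSpace E] (ν : Measure E) (z : E → ℝ≥0∞)
    (a : ℝ≥0∞) (x : E) : ℝ≥0∞ :=
  a * z x + (1 - a) * (ν {0})⁻¹ * indicator {0} 1 x

theorem ae_ne_zero_of_absolutelyContinuous_withDensity {α : Type*} [MeasurableSpace α]
    {ν : Measure α} {z : α → ℝ≥0∞} (hz : AEMeasurable z ν) (h : ν ≪ ν.withDensity z) :
    ∀ᵐ x ∂ν, z x ≠ 0 :=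
  h.ae_le ((ae_withDensity_iff' hz).2 (ae_of_all _ fun _ => id))

theorem integrable_exp_neg_sq_add_mul_norm {E : Type*} [NormedAddCommGroup E] [MeasurableSpace E]
    [OpensMeasurableSpace E] (ν : Measure E) [IsFiniteMeasure ν] (c : ℝ) :
    Integrable (fun x => Real.exp (-‖x‖ ^ 2 + c * ‖x‖)) ν := by
  refine (integrable_const (Real.exp (c ^ 2 / 4))).mono' (by fun_prop) (ae_of_all _ fun x => ?_)
  rw [Real.norm_of_nonneg (Real.exp_pos _).le, Real.exp_le_exp]
  nlinarith [sq_nonneg (‖x‖ - c / 2)]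

theorem hasExpMoments_withDensity_exp_neg_sq {E : Type*} [NormedAddCommGroup E]
    [MeasurableSpace E] [OpensMeasurableSpace E] (ν : Measure E) [IsFiniteMeasure ν] :
    HasExpMoments (ν.withDensity fun x => ENNReal.ofReal (Real.exp (-‖x‖ ^ 2))) := by
  intro c
  rw [integrable_withDensity_iff_integrable_smul' (by fun_prop) (ae_of_all _ fun x => by simp)]
  simpa [ENNReal.toReal_ofReal (Real.exp_pos _).le, ← Real.exp_add] using
    integrable_exp_neg_sq_add_mul_norm ν c

theorem mixAtomZero_one {E : Type*} [Zero E] [MeasurableSpace E] (ν : Measure E) (z : E → ℝ≥0∞) :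
    mixAtomZero ν z 1 = z := by
  ext x
  simp [mixAtomZero]

theorem measurable_uncurry_mixAtomZero {Ω E : Type*} [MeasurableSpace Ω] [Zero E]
    [MeasurableSpace E] [MeasurableSingletonClass E] (κ : Kernel Ω E) {z : Ω → E → ℝ≥0∞}
    (hz : Measurable (Function.uncurry z)) {a : Ω → ℝ≥0∞} (ha : Measurable a) :
    Measurable (Function.uncurry fun ω => mixAtomZero (κ ω) (z ω) (a ω)) := by
  have h0 : Measurable fun ω => κ ω {0} := κ.measurable_coe (measurableSet_singleton 0)
  have h_ind : Measurable (indicator {0} 1 : E → ℝ≥0∞) :=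
    measurable_one.indicator (measurableSet_singleton 0)
  exact ((ha.comp measurable_fst).mul hz).add
    ((((ha.const_sub 1).mul h0.inv).comp measurable_fst).mul (h_ind.comp measurable_snd))

section MixAtomZero

variable {E : Type*} [NormedAddCommGroup E] [MeasurableSpace E] [BorelSpace E] {ν : Measure E}
  {z : E → ℝ≥0∞} {a : ℝ≥0∞}

theorem withDensity_mixAtomZero [IsFiniteMeasure ν] (hz : Measurable z) (h0 : ν {0} ≠ 0) :
    ν.withDensity (mixAtomZero ν z a) = a • ν.withDensity z + (1 - a) • Measure.dirac 0 := by
  have h_eq : mixAtomZero ν z a = a • z + ((1 - a) * (ν {0})⁻¹) • indicator {0} 1 := rfl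
  rw [h_eq, withDensity_add_left (hz.const_smul a), withDensity_smul _ hz,
    withDensity_smul _ (measurable_one.indicator (measurableSet_singleton 0)),
    withDensity_indicator_one (measurableSet_singleton 0), Measure.restrict_singleton, smul_smul,
    mul_assoc, ENNReal.inv_mul_cancel h0 (measure_ne_top ν {0}), mul_one]

theorem withDensity_mixAtomZero_compl_zero [IsFiniteMeasure ν] (hz : Measurable z)
    (h0 : ν {0} ≠ 0) :
    ν.withDensity (mixAtomZero ν z a) {0}ᶜ = a * ν.withDensity z {0}ᶜ := by
  simp [withDensity_mixAtomZero hz h0]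

theorem lintegral_enorm_sq_withDensity_mixAtomZero [IsFiniteMeasure ν] (hz : Measurable z)
    (h0 : ν {0} ≠ 0) :
    ∫⁻ x, ‖x‖ₑ ^ 2 ∂(ν.withDensity (mixAtomZero ν z a)) =
      a * ∫⁻ x, ‖x‖ₑ ^ 2 ∂(ν.withDensity z) := by
  simp [withDensity_mixAtomZero hz h0]

theorem IsCenteringDensity.integrable_id [NormedSpace ℝ E] [SecondCountableTopology E]
    (h : IsCenteringDensity ν z) : Integrable (fun x => x) (ν.withDensity z) :=
  have := h.isProbabilityMeasure
  ((memLp_two_iff_lintegral_enorm_sq_ne_top measurable_id.aestronglyMeasurable).2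
    h.lintegral_enorm_sq_ne_top).integrable one_le_two

theorem isCenteringDensity_mixAtomZero [NormedSpace ℝ E] [SecondCountableTopology E]
    [CompleteSpace E] [IsFiniteMeasure ν] (h : IsCenteringDensity ν z) (hz : Measurable z)
    (h0 : ν {0} ≠ 0) (ha0 : a ≠ 0) (ha1 : a ≤ 1) :
    IsCenteringDensity ν (mixAtomZero ν z a) := by
  have := h.isProbabilityMeasure
  have ha_top : a ≠ ∞ := ne_top_of_le_ne_top ENNReal.one_ne_top ha1
  have h_mix := withDensity_mixAtomZero (a := a) hz h0
  refine ⟨?_, ⟨?_⟩, ?_, ?_⟩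
  · filter_upwards [h.ae_ne_zero] with x hx
    simp [mixAtomZero, ha0, hx]
  · simp [h_mix, add_tsub_cancel_of_le ha1]
  · rw [lintegral_enorm_sq_withDensity_mixAtomZero hz h0]
    exact ENNReal.mul_ne_top ha_top h.lintegral_enorm_sq_ne_top
  · have h_dirac : Integrable (fun x => x) ((1 - a) • Measure.dirac (0 : E)) :=
      (integrable_dirac (by simp)).smul_measure (by simp)
    rw [h_mix, integral_add_measure (h.integrable_id.smul_measure ha_top) h_dirac]
    simp [integral_smul_measure, h.integral_eq_zero]

theorem isCenteringDensity_mixAtomZero_div [NormedSpace ℝ E] [SecondCountableTopology E]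
    [CompleteSpace E] [IsFiniteMeasure ν] (h : IsCenteringDensity ν z) (hz : Measurable z)
    (h0 : ν {0} ≠ 0) {ε K : ℝ≥0∞} (hε0 : ε ≠ 0) (hε1 : ε ≤ 1)
    (hK : K = 1 + ∫⁻ x, ‖x‖ₑ ^ 2 ∂(ν.withDensity z)) :
    IsCenteringDensity ν (mixAtomZero ν z (ε / K)) ∧
      ν.withDensity (mixAtomZero ν z (ε / K)) {0}ᶜ ≤ ε ∧
      ∫⁻ x, ‖x‖ₑ ^ 2 ∂(ν.withDensity (mixAtomZero ν z (ε / K))) ≤ ε := by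
  have := h.isProbabilityMeasure
  have hK_top : K ≠ ∞ := hK ▸ ENNReal.add_ne_top.2 ⟨ENNReal.one_ne_top, h.lintegral_enorm_sq_ne_top⟩
  have hK_one : 1 ≤ K := hK ▸ le_self_add
  have hK_zero : K ≠ 0 := (one_pos.trans_le hK_one).ne'
  have h_le {r : ℝ≥0∞} (hr : r ≤ K) : ε / K * r ≤ ε :=
    (mul_le_mul_right hr _).trans (ENNReal.div_mul_cancel hK_zero hK_top).le
  refine ⟨isCenteringDensity_mixAtomZero h hz h0 (ENNReal.div_ne_zero.2 ⟨hε0, hK_top⟩) ?_, ?_, ?_⟩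
  · simpa using (h_le hK_one).trans hε1
  · rw [withDensity_mixAtomZero_compl_zero hz h0]
    exact h_le (prob_le_one.trans hK_one)
  · rw [lintegral_enorm_sq_withDensity_mixAtomZero hz h0]
    exact h_le (hK ▸ le_add_self)

end MixAtomZero

theorem HasExpMoments.isCenteringDensity {E : Type*} [NormedAddCommGroup E]
    [NormedSpace ℝ E] [CompleteSpace E] [SecondCountableTopology E] [MeasurableSpace E]
    [BorelSpace E] {ν π : Measure E} [NeZero ν] (hπ : HasExpMoments π) (h_ac : ν ≪ π)
    {l : StrongDual ℝ E} (hl : ∀ l', laplace π l ≤ laplace π l') {z : E → ℝ≥0∞}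
    (hz_meas : Measurable z) (hz : ν.withDensity z = π.tilted l) : IsCenteringDensity ν z where
  ae_ne_zero := ae_ne_zero_of_absolutelyContinuous_withDensity hz_meas.aemeasurable
    (hz ▸ h_ac.trans (absolutelyContinuous_tilted (hπ.integrable_exp l)))
  isProbabilityMeasure := by
    have : NeZero π := ⟨fun h => NeZero.ne ν (Measure.absolutelyContinuous_zero_iff.1 (h ▸ h_ac))⟩
    exact hz ▸ isProbabilityMeasure_tilted (hπ.integrable_exp l)
  lintegral_enorm_sq_ne_top := by
    rw [hz]
    exact (memLp_two_iff_lintegral_enorm_sq_ne_top measurable_id.aestronglyMeasurable).1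
      ((hπ.tilted l).memLp_id 2)
  integral_eq_zero := hz ▸ hπ.integral_tilted_eq_zero hl

section CenteringKernel

variable {Ω E : Type*} {mΩ : MeasurableSpace Ω} [NormedAddCommGroup E] [NormedSpace ℝ E]
  [FiniteDimensional ℝ E] [MeasurableSpace E] [BorelSpace E]

theorem exists_measurable_isCenteringDensity (κ : Kernel Ω E) [IsMarkovKernel κ] :
    ∃ z : Ω → E → ℝ≥0∞, Measurable (Function.uncurry z) ∧
      ∀ ω, NoArbitrage (κ ω) → IsCenteringDensity (κ ω) (z ω) := by
  let g : E → ℝ≥0∞ := fun x => ENNReal.ofReal (Real.exp (-‖x‖ ^ 2))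
  have hg_meas : Measurable g := by fun_prop
  have hg_uncurry : Measurable (Function.uncurry fun _ : Ω => g) := hg_meas.comp measurable_snd
  let π : Kernel Ω E := κ.withDensity fun _ => g
  have hπ_apply (ω : Ω) : π ω = (κ ω).withDensity g := Kernel.withDensity_apply κ hg_uncurry ω
  have hπ_exp (ω : Ω) : HasExpMoments (π ω) :=
    hπ_apply ω ▸ hasExpMoments_withDensity_exp_neg_sq (κ ω)
  have hπ_ac (ω : Ω) : κ ω ≪ π ω := hπ_apply ω ▸ withDensity_absolutelyContinuous'
    hg_meas.aemeasurable (ae_of_all _ fun x => by simp [g, Real.exp_pos])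
  have hπ_ac' (ω : Ω) : π ω ≪ κ ω := hπ_apply ω ▸ withDensity_absolutelyContinuous _ _
  have : IsSFiniteKernel π := Kernel.IsSFiniteKernel.withDensity κ fun _ x => by simp [g]
  obtain ⟨h, h_meas, h_tilted⟩ := exists_measurable_withDensity_eq_tilted π hπ_exp
  refine ⟨fun ω => g * h ω, hg_uncurry.mul h_meas, fun ω h_na => ?_⟩
  obtain ⟨l, hl⟩ := (hπ_exp ω).exists_forall_laplace_le
    (h_na.of_absolutelyContinuous (hπ_ac ω) (hπ_ac' ω))
  have hω_meas : Measurable (h ω) := h_meas.of_uncurry_left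
  refine (hπ_exp ω).isCenteringDensity (hπ_ac ω) hl (hg_meas.mul hω_meas) ?_
  rw [withDensity_mul _ hg_meas hω_meas, ← hπ_apply, h_tilted ω l hl]

theorem exists_measurable_isCenteringDensity_concentrated (κ : Kernel Ω E) [IsMarkovKernel κ]
    {ε : ℝ≥0∞} (hε0 : ε ≠ 0) (hε1 : ε ≤ 1) :
    ∃ z : Ω → E → ℝ≥0∞, Measurable (Function.uncurry z) ∧
      ∀ ω, NoArbitrage (κ ω) → IsCenteringDensity (κ ω) (z ω) ∧ (κ ω {0} ≠ 0 →
        (κ ω).withDensity (z ω) {0}ᶜ ≤ ε ∧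
          ∫⁻ x, ‖x‖ₑ ^ 2 ∂((κ ω).withDensity (z ω)) ≤ ε) := by
  classical
  obtain ⟨z, hz_meas, hz⟩ := exists_measurable_isCenteringDensity κ
  have hzω_meas (ω : Ω) : Measurable (z ω) := hz_meas.of_uncurry_left
  let K : Ω → ℝ≥0∞ := fun ω => 1 + ∫⁻ x, ‖x‖ₑ ^ 2 ∂((κ ω).withDensity (z ω))
  have hK_meas : Measurable K := by
    simp only [K, lintegral_withDensity_eq_lintegral_mul _ (hzω_meas _)
      (by fun_prop : Measurable fun x : E => ‖x‖ₑ ^ 2)]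
    exact (hz_meas.mul (by fun_prop)).lintegral_kernel_prod_right.const_add 1
  let a : Ω → ℝ≥0∞ := fun ω => if κ ω {0} = 0 then 1 else ε / K ω
  have ha_meas : Measurable a :=
    .ite (κ.measurable_coe (measurableSet_singleton 0) (measurableSet_singleton 0))
      measurable_const (hK_meas.const_div ε)
  refine ⟨fun ω => mixAtomZero (κ ω) (z ω) (a ω), measurable_uncurry_mixAtomZero κ hz_meas ha_meas,
    fun ω h_na => ?_⟩
  by_cases h0 : κ ω {0} = 0
  · simp only [a, h0, if_true, mixAtomZero_one]
    exact ⟨hz ω h_na, fun h => absurd rfl h⟩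
  · simp only [a, h0, if_false]
    obtain ⟨h_centering, h_concentrated⟩ :=
      isCenteringDensity_mixAtomZero_div (hz ω h_na) (hzω_meas ω) h0 hε0 hε1 (K := K ω) rfl
    exact ⟨h_centering, fun _ => h_concentrated⟩

end CenteringKernel

/-- `κ ω` is a regular conditional law of `ξ` given `m`, phrased through lower integrals: both the
measurability of `κ` and the disintegration formula are required on `m`-measurable integrands. The
measures `κ ω` are not assumed to be probability measures for every `ω`, so that the notion is
stable under reweighting by densities that are normalised only almost surely. -/
structure IsCondLaw {Ω E : Type*} (m : MeasurableSpace Ω) {m0 : MeasurableSpace Ω}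
    [mE : MeasurableSpace E] (μ : Measure Ω) (ξ : Ω → E) (κ : Ω → Measure E) : Prop where
  measurable_lintegral : ∀ {f : Ω → E → ℝ≥0∞}, Measurable[m.prod mE] (Function.uncurry f) →
    Measurable[m] fun ω => ∫⁻ x, f ω x ∂κ ω
  lintegral_eq : ∀ {f : Ω → E → ℝ≥0∞}, Measurable[m.prod mE] (Function.uncurry f) →
    ∫⁻ ω, f ω (ξ ω) ∂μ = ∫⁻ ω, ∫⁻ x, f ω x ∂κ ω ∂μ

section CondLaw

variable {Ω E : Type*} {m m' m0 : MeasurableSpace Ω} [mE : MeasurableSpace E] {μ : Measure Ω}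
  {ξ : Ω → E} {κ : Ω → Measure E} {z : Ω → E → ℝ≥0∞}

theorem setLIntegral_eq_measure_inter_preimage_of_condExp [IsFiniteMeasure μ] (hm : m ≤ m0)
    (hξ : Measurable ξ) {A : Set E} (hA : MeasurableSet A)
    (hκ_fin : ∀ᵐ ω ∂μ, κ ω A < ∞)
    (hκ_cond : (fun ω => (κ ω A).toReal) =ᵐ[μ] μ[indicator {ω | ξ ω ∈ A} (fun _ => (1 : ℝ)) | m])
    {B : Set Ω} (hB : MeasurableSet[m] B) :
    ∫⁻ ω in B, κ ω A ∂μ = μ (B ∩ ξ ⁻¹' A) := by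
  have hξA : MeasurableSet {ω | ξ ω ∈ A} := hξ hA
  have h_toReal : ∫ ω in B, (κ ω A).toReal ∂μ = μ.real (B ∩ ξ ⁻¹' A) := by
    rw [setIntegral_congr_ae (hm _ hB) (hκ_cond.mono fun ω hω _ => hω),
      setIntegral_condExp hm ((integrable_const 1).indicator hξA) hB,
      setIntegral_indicator hξA, setIntegral_one_eq_measureReal]
    rfl
  have h_int : Integrable (fun ω => (κ ω A).toReal) μ := integrable_condExp.congr hκ_cond.symm
  rw [← ENNReal.ofReal_toReal (measure_ne_top μ (B ∩ ξ ⁻¹' A)), ← measureReal_def, ← h_toReal,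
    ofReal_integral_eq_lintegral_ofReal h_int.integrableOn (ae_of_all _ fun _ => by positivity)]
  refine lintegral_congr_ae (ae_restrict_of_ae (hκ_fin.mono fun ω hω => ?_))
  exact (ENNReal.ofReal_toReal hω.ne).symm

theorem isCondLaw_of_condExp [IsFiniteMeasure μ] (hm : m ≤ m0) (hξ : Measurable ξ)
    (η : Kernel[m] Ω E) [IsFiniteKernel η]
    (hη : ∀ A, MeasurableSet A → (fun ω => (η ω A).toReal) =ᵐ[μ]
      μ[indicator {ω | ξ ω ∈ A} (fun _ => (1 : ℝ)) | m]) :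
    IsCondLaw m μ ξ η where
  measurable_lintegral hf := hf.lintegral_kernel_prod_right
  lintegral_eq {f} hf := by
    have h_pair : @Measurable Ω (Ω × E) m0 (m.prod mE) fun ω => (ω, ξ ω) :=
      (measurable_id'' hm).prodMk hξ
    have h_joint : @Measure.map Ω (Ω × E) m0 (m.prod mE) (fun ω => (ω, ξ ω)) μ =
        (μ.trim hm) ⊗ₘ η := by
      refine Measure.ext_prod fun {B A} hB hA => ?_
      rw [Measure.compProd_apply_prod hB hA, Measure.map_apply h_pair (hB.prod hA),
        restrict_trim hm μ hB, lintegral_trim hm (η.measurable_coe hA),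
        setLIntegral_eq_measure_inter_preimage_of_condExp hm hξ hA
          (ae_of_all _ fun ω => measure_lt_top _ _) (hη A hA) hB]
      rfl
    calc ∫⁻ ω, f ω (ξ ω) ∂μ
        = ∫⁻ p, Function.uncurry f p ∂((μ.trim hm) ⊗ₘ η) :=
          h_joint ▸ (@lintegral_map _ _ m0 (m.prod mE) _ _ _ hf h_pair).symm
      _ = ∫⁻ ω, ∫⁻ x, f ω x ∂η ω ∂μ := by
          rw [Measure.lintegral_compProd hf]
          exact lintegral_trim hm hf.lintegral_kernel_prod_right

theorem IsCondLaw.setLIntegral_comp (h : IsCondLaw m μ ξ κ) (hm : m ≤ m0) {B : Set Ω}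
    (hB : MeasurableSet[m] B) {g : E → ℝ≥0∞} (hg : Measurable g) :
    ∫⁻ ω in B, g (ξ ω) ∂μ = ∫⁻ ω in B, ∫⁻ x, g x ∂κ ω ∂μ := by
  have hB_ind : Measurable[m] (B.indicator 1 : Ω → ℝ≥0∞) := measurable_const.indicator hB
  have h_eq := h.lintegral_eq (f := fun ω x => B.indicator 1 ω * g x)
    ((hB_ind.comp measurable_fst).mul (hg.comp measurable_snd))
  simp only [lintegral_const_mul _ hg] at h_eq
  rw [← lintegral_indicator (hm _ hB), ← lintegral_indicator (hm _ hB)]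
  simpa [indicator, ite_mul] using h_eq

theorem IsCondLaw.lintegral_comp (h : IsCondLaw m μ ξ κ) (hm : m ≤ m0) {g : E → ℝ≥0∞}
    (hg : Measurable g) : ∫⁻ ω, g (ξ ω) ∂μ = ∫⁻ ω, ∫⁻ x, g x ∂κ ω ∂μ := by
  simpa using h.setLIntegral_comp hm .univ hg

theorem IsCondLaw.ae_ae_iff (h : IsCondLaw m μ ξ κ) (hm : m ≤ m0) (hξ : Measurable ξ)
    {p : Ω → E → Prop} (hp : MeasurableSet[m.prod mE] {q : Ω × E | p q.1 q.2}) :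
    (∀ᵐ ω ∂μ, ∀ᵐ x ∂κ ω, p ω x) ↔ ∀ᵐ ω ∂μ, p ω (ξ ω) := by
  classical
  let f : Ω → E → ℝ≥0∞ := fun ω x => if p ω x then 0 else 1
  have hf : Measurable[m.prod mE] (Function.uncurry f) :=
    .ite hp measurable_const measurable_const
  have hfξ : Measurable fun ω => f ω (ξ ω) := hf.comp ((measurable_id'' hm).prodMk hξ)
  have hf_eq_zero (ω : Ω) (x : E) : f ω x = 0 ↔ p ω x := by simp [f]
  have h_inner (ω : Ω) : ∫⁻ x, f ω x ∂κ ω = 0 ↔ ∀ᵐ x ∂κ ω, p ω x := by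
    rw [lintegral_eq_zero_iff hf.of_uncurry_left]
    exact eventually_congr (ae_of_all _ fun x => hf_eq_zero ω x)
  calc (∀ᵐ ω ∂μ, ∀ᵐ x ∂κ ω, p ω x) ↔ ∫⁻ ω, ∫⁻ x, f ω x ∂κ ω ∂μ = 0 := by
        rw [lintegral_eq_zero_iff ((h.measurable_lintegral hf).mono hm le_rfl)]
        exact eventually_congr (ae_of_all _ fun ω => (h_inner ω).symm)
    _ ↔ ∀ᵐ ω ∂μ, p ω (ξ ω) := by
        rw [← h.lintegral_eq hf, lintegral_eq_zero_iff hfξ]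
        exact eventually_congr (ae_of_all _ fun ω => hf_eq_zero ω (ξ ω))

theorem IsCondLaw.of_trim_eq (h : IsCondLaw m μ ξ κ) (hm : m ≤ m') (hm' : m' ≤ m0)
    (hξ : Measurable[m'] ξ) {μ' : Measure Ω} (h_trim : μ.trim hm' = μ'.trim hm') :
    IsCondLaw m μ' ξ κ where
  measurable_lintegral := h.measurable_lintegral
  lintegral_eq {f} hf := by
    have h_left : Measurable[m'] fun ω => f ω (ξ ω) := hf.comp ((measurable_id'' hm).prodMk hξ)
    have h_right : Measurable[m'] fun ω => ∫⁻ x, f ω x ∂κ ω :=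
      (h.measurable_lintegral hf).mono hm le_rfl
    rw [← lintegral_trim hm' h_left, ← lintegral_trim hm' h_right, ← h_trim,
      lintegral_trim hm' h_left, lintegral_trim hm' h_right, h.lintegral_eq hf]

theorem IsCondLaw.lintegral_mul_eq (h : IsCondLaw m μ ξ κ)
    (hz : Measurable[m.prod mE] (Function.uncurry z))
    (hz_int : ∀ᵐ ω ∂μ, ∫⁻ x, z ω x ∂κ ω = 1) {g : Ω → ℝ≥0∞} (hg : Measurable[m] g) :
    ∫⁻ ω, g ω * z ω (ξ ω) ∂μ = ∫⁻ ω, g ω ∂μ := by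
  rw [h.lintegral_eq (f := fun ω x => g ω * z ω x) ((hg.comp measurable_fst).mul hz)]
  refine lintegral_congr_ae (hz_int.mono fun ω hω => ?_)
  dsimp only
  rw [lintegral_const_mul _ hz.of_uncurry_left, hω, mul_one]

theorem IsCondLaw.trim_withDensity_mul (h : IsCondLaw m μ ξ κ) (hm : m ≤ m0)
    (hz : Measurable[m.prod mE] (Function.uncurry z))
    (hz_int : ∀ᵐ ω ∂μ, ∫⁻ x, z ω x ∂κ ω = 1) {Z : Ω → ℝ≥0∞} (hZ : Measurable[m] Z) :
    (μ.withDensity fun ω => Z ω * z ω (ξ ω)).trim hm = (μ.withDensity Z).trim hm := by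
  refine @Measure.ext Ω m _ _ fun A hA => ?_
  rw [trim_measurableSet_eq hm hA, trim_measurableSet_eq hm hA, withDensity_apply _ (hm _ hA),
    withDensity_apply _ (hm _ hA), ← lintegral_indicator (hm _ hA), ← lintegral_indicator (hm _ hA),
    ← h.lintegral_mul_eq hz hz_int (hZ.indicator hA)]
  simp only [indicator_mul_left]

theorem IsCondLaw.withDensity (h : IsCondLaw m μ ξ κ) (hm : m ≤ m0) (hξ : Measurable ξ)
    (hz : Measurable[m.prod mE] (Function.uncurry z))
    (hz_int : ∀ᵐ ω ∂μ, ∫⁻ x, z ω x ∂κ ω = 1) {Z : Ω → ℝ≥0∞} (hZ : Measurable[m] Z) :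
    IsCondLaw m (μ.withDensity fun ω => Z ω * z ω (ξ ω)) ξ
      (fun ω => (κ ω).withDensity (z ω)) := by
  have hzω (ω : Ω) : Measurable (z ω) := hz.of_uncurry_left
  have h_dens : Measurable fun ω => Z ω * z ω (ξ ω) :=
    (hZ.mono hm le_rfl).mul (hz.comp ((measurable_id'' hm).prodMk hξ))
  have h_inner {f : Ω → E → ℝ≥0∞} (hf : Measurable[m.prod mE] (Function.uncurry f)) (ω : Ω) :
      ∫⁻ x, f ω x ∂(κ ω).withDensity (z ω) = ∫⁻ x, z ω x * f ω x ∂κ ω :=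
    lintegral_withDensity_eq_lintegral_mul _ (hzω ω) hf.of_uncurry_left
  have h_meas {f : Ω → E → ℝ≥0∞} (hf : Measurable[m.prod mE] (Function.uncurry f)) :
      Measurable[m] fun ω => ∫⁻ x, f ω x ∂(κ ω).withDensity (z ω) := by
    simp only [h_inner hf]
    exact h.measurable_lintegral (hz.mul hf)
  refine ⟨h_meas, fun {f} hf => ?_⟩
  have hfξ : Measurable fun ω => f ω (ξ ω) := hf.comp ((measurable_id'' hm).prodMk hξ)
  calc ∫⁻ ω, f ω (ξ ω) ∂μ.withDensity (fun ω => Z ω * z ω (ξ ω))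
      = ∫⁻ ω, Z ω * (z ω (ξ ω) * f ω (ξ ω)) ∂μ := by
        rw [lintegral_withDensity_eq_lintegral_mul _ h_dens hfξ]
        simp only [Pi.mul_apply, mul_assoc]
    _ = ∫⁻ ω, Z ω * ∫⁻ x, f ω x ∂(κ ω).withDensity (z ω) ∂μ := by
        rw [h.lintegral_eq (f := fun ω x => Z ω * (z ω x * f ω x))
          ((hZ.comp measurable_fst).mul (hz.mul hf))]
        refine lintegral_congr fun ω => ?_
        rw [h_inner hf]
        exact lintegral_const_mul _ ((hzω ω).mul hf.of_uncurry_left)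
    _ = ∫⁻ ω, Z ω * (∫⁻ x, f ω x ∂(κ ω).withDensity (z ω)) * z ω (ξ ω) ∂μ :=
        (h.lintegral_mul_eq hz hz_int (hZ.mul (h_meas hf))).symm
    _ = ∫⁻ ω, ∫⁻ x, f ω x ∂(κ ω).withDensity (z ω) ∂μ.withDensity
          (fun ω => Z ω * z ω (ξ ω)) := by
        rw [lintegral_withDensity_eq_lintegral_mul _ h_dens ((h_meas hf).mono hm le_rfl)]
        simp only [Pi.mul_apply, mul_right_comm]

theorem lintegral_ofReal_eq_lintegral_ofReal_neg {α : Type*} [MeasurableSpace α] {ν : Measure α}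
    {f : α → ℝ} (hf : Integrable f ν) (h0 : ∫ x, f x ∂ν = 0) :
    ∫⁻ x, ENNReal.ofReal (f x) ∂ν = ∫⁻ x, ENNReal.ofReal (-f x) ∂ν := by
  rw [integral_eq_lintegral_pos_part_sub_lintegral_neg_part hf, sub_eq_zero] at h0
  exact (ENNReal.toReal_eq_toReal_iff' hf.lintegral_lt_top.ne hf.neg.lintegral_lt_top.ne).1 h0

theorem IsCondLaw.setIntegral_eq_zero [NormedAddCommGroup E] [NormedSpace ℝ E] [CompleteSpace E]
    [OpensMeasurableSpace E] (h : IsCondLaw m μ ξ κ) (hm : m ≤ m0) (hξ : Integrable ξ μ)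
    (hκ_int : ∀ᵐ ω ∂μ, Integrable (fun x => x) (κ ω)) (hκ_mean : ∀ᵐ ω ∂μ, ∫ x, x ∂κ ω = 0)
    {A : Set Ω} (hA : MeasurableSet[m] A) : ∫ ω in A, ξ ω ∂μ = 0 := by
  refine SeparatingDual.eq_zero_of_forall_dual_eq_zero (R := ℝ) fun l => ?_
  rw [← l.integral_comp_comm hξ.integrableOn,
    integral_eq_lintegral_pos_part_sub_lintegral_neg_part (l.integrable_comp hξ).integrableOn,
    sub_eq_zero]
  congr 1
  rw [h.setLIntegral_comp hm hA (g := fun x => ENNReal.ofReal (l x)) (by fun_prop),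
    h.setLIntegral_comp hm hA (g := fun x => ENNReal.ofReal (-l x)) (by fun_prop)]
  refine lintegral_congr_ae (ae_restrict_of_ae ?_)
  filter_upwards [hκ_int, hκ_mean] with ω hω_int hω_mean
  have h_mean : ∫ x, l x ∂κ ω = 0 := by rw [l.integral_comp_comm hω_int, hω_mean, map_zero]
  exact lintegral_ofReal_eq_lintegral_ofReal_neg (l.integrable_comp hω_int) h_mean

end CondLaw

/-- The transition laws `κ n` of a process with increments `ξ n`, each revealed at time `n + 1`,
together with normalised densities `z n` that reweight them. -/
structure IsTransitionDensity {Ω E : Type*} {m0 : MeasurableSpace Ω} [mE : MeasurableSpace E]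
    (𝒢 : Filtration ℕ m0) (μ : Measure Ω) (ξ : ℕ → Ω → E) (κ : ℕ → Ω → Measure E)
    (z : ℕ → Ω → E → ℝ≥0∞) : Prop where
  measurable_increment : ∀ n, Measurable[𝒢 (n + 1)] (ξ n)
  isCondLaw : ∀ n, IsCondLaw (𝒢 n) μ (ξ n) (κ n)
  measurable_density : ∀ n, Measurable[(𝒢 n).prod mE] (Function.uncurry (z n))
  lintegral_eq_one : ∀ n, ∀ᵐ ω ∂μ, ∫⁻ x, z n ω x ∂κ n ω = 1

/-- The density, up to time `n`, of the measure under which the initial law is reweighted by `w` and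
the law of the increment `ξ k` by `z k`. -/
def densityProd {Ω E : Type*} (w : Ω → ℝ≥0∞) (z : ℕ → Ω → E → ℝ≥0∞) (ξ : ℕ → Ω → E) (n : ℕ)
    (ω : Ω) : ℝ≥0∞ :=
  w ω * ∏ k ∈ Finset.range n, z k ω (ξ k ω)

theorem densityProd_zero {Ω E : Type*} (w : Ω → ℝ≥0∞) (z : ℕ → Ω → E → ℝ≥0∞)
    (ξ : ℕ → Ω → E) : densityProd w z ξ 0 = w := by
  ext ω
  simp [densityProd]

theorem densityProd_succ {Ω E : Type*} (w : Ω → ℝ≥0∞) (z : ℕ → Ω → E → ℝ≥0∞)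
    (ξ : ℕ → Ω → E) (n : ℕ) :
    densityProd w z ξ (n + 1) = fun ω => densityProd w z ξ n ω * z n ω (ξ n ω) := by
  ext ω
  rw [densityProd, densityProd, Finset.prod_range_succ, mul_assoc]

theorem densityProd_eq_of_le {Ω E : Type*} (w : Ω → ℝ≥0∞) {z : ℕ → Ω → E → ℝ≥0∞}
    {ξ : ℕ → Ω → E} {ω : Ω} {n k : ℕ} (hnk : n ≤ k) (h : ∀ j, n ≤ j → z j ω (ξ j ω) = 1) :
    densityProd w z ξ k ω = densityProd w z ξ n ω := by
  induction k, hnk using Nat.le_induction with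
  | base => rfl
  | succ k hnk ih => simp only [densityProd_succ, h k hnk, mul_one, ih]

theorem tendsto_setLIntegral_of_eq_on_monotone {Ω : Type*} [MeasurableSpace Ω] {μ : Measure Ω}
    {Z : ℕ → Ω → ℝ≥0∞} {Y : Ω → ℝ≥0∞} {S : ℕ → Set Ω} (hY : Measurable Y)
    (hS : ∀ n, MeasurableSet (S n)) (hS_mono : ∀ᵐ ω ∂μ, ∀ n, ω ∈ S n → ω ∈ S (n + 1))
    (hS_ex : ∀ᵐ ω ∂μ, ∃ n, ω ∈ S n) (h_eq : ∀ᵐ ω ∂μ, ∀ n, ω ∈ S n → Z n ω = Y ω)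
    (h_compl : Tendsto (fun n => ∫⁻ ω in (S n)ᶜ, Z n ω ∂μ) atTop (𝓝 0)) {A : Set Ω}
    (hA : MeasurableSet A) :
    Tendsto (fun n => ∫⁻ ω in A, Z n ω ∂μ) atTop (𝓝 (∫⁻ ω in A, Y ω ∂μ)) := by
  have hS_mono' : ∀ᵐ ω ∂μ, Monotone fun n => ω ∈ S n := hS_mono.mono fun ω hω =>
    monotone_nat_of_le_succ hω
  have h_inter : Tendsto (fun n => ∫⁻ ω in A, (S n).indicator Y ω ∂μ) atTop
      (𝓝 (∫⁻ ω in A, Y ω ∂μ)) := by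
    refine lintegral_tendsto_of_tendsto_of_monotone
      (fun n => (hY.indicator (hS n)).aemeasurable) (ae_restrict_of_ae ?_) (ae_restrict_of_ae ?_)
    · filter_upwards [hS_mono'] with ω hω i j hij
      by_cases hi : ω ∈ S i
      · simp only [indicator_of_mem hi, indicator_of_mem (hω hij hi), le_refl]
      · simp only [indicator_of_notMem hi, zero_le]
    · filter_upwards [hS_mono', hS_ex] with ω hω ⟨N, hN⟩
      refine tendsto_const_nhds.congr' ((eventually_ge_atTop N).mono fun n hn => ?_)
      exact (indicator_of_mem (hω hn hN) Y).symm
  have h_diff : Tendsto (fun n => ∫⁻ ω in A ∩ (S n)ᶜ, Z n ω ∂μ) atTop (𝓝 0) :=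
    tendsto_of_tendsto_of_tendsto_of_le_of_le tendsto_const_nhds h_compl (fun _ => bot_le)
      fun n => lintegral_mono_set inter_subset_right
  refine (add_zero (∫⁻ ω in A, Y ω ∂μ) ▸ h_inter.add h_diff).congr fun n => ?_
  rw [← lintegral_inter_add_sdiff (Z n) A (hS n), Set.sdiff_eq, setLIntegral_indicator (hS n),
    inter_comm (S n)]
  congr 1
  exact setLIntegral_congr_fun_ae (hA.inter (hS n)) (h_eq.mono fun ω hω h => (hω n h.2).symm)

theorem exists_measurable_weight_lintegral_mul_ne_top {Ω : Type*} {m m0 : MeasurableSpace Ω}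
    (hm : m ≤ m0) (μ : Measure Ω) [IsFiniteMeasure μ] [NeZero μ] {V : Ω → ℝ≥0∞}
    (hV : Measurable[m] V) (hV_fin : ∀ᵐ ω ∂μ, V ω ≠ ∞) :
    ∃ w : Ω → ℝ≥0∞, Measurable[m] w ∧ (∀ᵐ ω ∂μ, w ω ≠ 0) ∧ ∫⁻ ω, w ω ∂μ = 1 ∧
      ∫⁻ ω, w ω * V ω ∂μ ≠ ∞ := by
  let v : Ω → ℝ≥0∞ := fun ω => (1 + V ω)⁻¹
  have hv : Measurable[m] v := (measurable_const.add hV).inv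
  have hv_m0 : Measurable v := hv.mono hm le_rfl
  have hv_pos : ∀ᵐ ω ∂μ, v ω ≠ 0 :=
    hV_fin.mono fun ω hω => ENNReal.inv_ne_zero.2 (ENNReal.add_ne_top.2 ⟨ENNReal.one_ne_top, hω⟩)
  have hv_le (ω : Ω) : v ω ≤ 1 := ENNReal.inv_le_one.2 le_self_add
  have hvV_le (ω : Ω) : v ω * V ω ≤ 1 :=
    (mul_le_mul_right le_add_self _).trans (ENNReal.inv_mul_le_one _)
  have h_int_le {f : Ω → ℝ≥0∞} (hf : ∀ ω, f ω ≤ 1) : ∫⁻ ω, f ω ∂μ ≠ ∞ :=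
    ne_top_of_le_ne_top (measure_ne_top μ univ) ((lintegral_mono hf).trans (lintegral_one).le)
  have h_int_ne_zero : ∫⁻ ω, v ω ∂μ ≠ 0 := by
    rw [Ne, lintegral_eq_zero_iff hv_m0]
    exact fun h => (hv_pos.and h).exists.elim fun ω hω => hω.1 hω.2
  let c : ℝ≥0∞ := (∫⁻ ω, v ω ∂μ)⁻¹
  have hc : c ≠ ∞ := ENNReal.inv_ne_top.2 h_int_ne_zero
  refine ⟨fun ω => c * v ω, hv.const_mul c, ?_, ?_, ?_⟩
  · exact hv_pos.mono fun ω hω => mul_ne_zero (ENNReal.inv_ne_zero.2 (h_int_le hv_le)) hω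
  · rw [lintegral_const_mul _ hv_m0]
    exact ENNReal.inv_mul_cancel h_int_ne_zero (h_int_le hv_le)
  · have hvV : Measurable fun ω => v ω * V ω := hv_m0.mul (hV.mono hm le_rfl)
    simp only [mul_assoc]
    rw [lintegral_const_mul _ hvV]
    exact ENNReal.mul_ne_top hc (h_int_le hvV_le)

section MeasureChange

variable {Ω E : Type*} {m0 : MeasurableSpace Ω} [mE : MeasurableSpace E] {𝒢 : Filtration ℕ m0}
  {μ : Measure Ω} {ξ : ℕ → Ω → E} {κ : ℕ → Ω → Measure E} {z : ℕ → Ω → E → ℝ≥0∞}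
  {w : Ω → ℝ≥0∞}

namespace IsTransitionDensity

theorem measurable (h : IsTransitionDensity 𝒢 μ ξ κ z) (n : ℕ) : Measurable (ξ n) :=
  (h.measurable_increment n).mono (𝒢.le _) le_rfl

theorem measurable_densityProd (h : IsTransitionDensity 𝒢 μ ξ κ z) (hw : Measurable[𝒢 0] w)
    (n : ℕ) : Measurable[𝒢 n] (densityProd w z ξ n) := by
  induction n with
  | zero => rwa [densityProd_zero]
  | succ n ih =>
    have h_le : 𝒢 n ≤ 𝒢 (n + 1) := 𝒢.mono n.le_succ
    rw [densityProd_succ]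
    exact (ih.mono h_le le_rfl).mul ((h.measurable_density n).comp
      ((measurable_id'' h_le).prodMk (h.measurable_increment n)))

theorem isCondLaw_withDensity_densityProd (h : IsTransitionDensity 𝒢 μ ξ κ z)
    (hw : Measurable[𝒢 0] w) (n : ℕ) :
    IsCondLaw (𝒢 n) (μ.withDensity (densityProd w z ξ (n + 1))) (ξ n)
      (fun ω => (κ n ω).withDensity (z n ω)) := by
  rw [densityProd_succ]
  exact (h.isCondLaw n).withDensity (𝒢.le n) (h.measurable n)
    (h.measurable_density n) (h.lintegral_eq_one n) (h.measurable_densityProd hw n)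

theorem withDensity_densityProd_apply (h : IsTransitionDensity 𝒢 μ ξ κ z)
    (hw : Measurable[𝒢 0] w) {n k : ℕ} (hnk : n ≤ k) {A : Set Ω} (hA : MeasurableSet[𝒢 n] A) :
    μ.withDensity (densityProd w z ξ k) A = μ.withDensity (densityProd w z ξ n) A := by
  induction k, hnk using Nat.le_induction with
  | base => rfl
  | succ k hnk ih =>
    have hA_k : MeasurableSet[𝒢 k] A := 𝒢.mono hnk _ hA
    rw [← ih, densityProd_succ, ← trim_measurableSet_eq (𝒢.le k) hA_k,
      (h.isCondLaw k).trim_withDensity_mul (𝒢.le k) (h.measurable_density k)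
        (h.lintegral_eq_one k) (h.measurable_densityProd hw k),
      trim_measurableSet_eq (𝒢.le k) hA_k]

theorem ae_densityProd_ne_zero (h : IsTransitionDensity 𝒢 μ ξ κ z) (hw : ∀ᵐ ω ∂μ, w ω ≠ 0)
    (hz : ∀ n, ∀ᵐ ω ∂μ, ∀ᵐ x ∂κ n ω, z n ω x ≠ 0) :
    ∀ᵐ ω ∂μ, ∀ n, densityProd w z ξ n ω ≠ 0 := by
  have hz_ξ : ∀ᵐ ω ∂μ, ∀ n, z n ω (ξ n ω) ≠ 0 := ae_all_iff.2 fun n =>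
    ((h.isCondLaw n).ae_ae_iff (p := fun ω x => z n ω x ≠ 0) (𝒢.le n) (h.measurable n)
      (h.measurable_density n (measurableSet_singleton 0).compl)).1 (hz n)
  filter_upwards [hw, hz_ξ] with ω hω_w hω_z n
  exact mul_ne_zero hω_w (Finset.prod_ne_zero_iff.2 fun k _ => hω_z k)

theorem ae_density_eq_one_of_eq_zero [Zero E] [MeasurableSingletonClass E]
    (h : IsTransitionDensity 𝒢 μ ξ κ z) (hκ : ∀ n ω, IsProbabilityMeasure (κ n ω))
    (h_absorb : ∀ᵐ ω ∂μ, ∀ n, ξ n ω = 0 → ξ (n + 1) ω = 0) :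
    ∀ᵐ ω ∂μ, ∀ n, ξ n ω = 0 → z (n + 1) ω (ξ (n + 1) ω) = 1 := by
  -- On `{ξ n = 0}` the next law is `δ₀`, so normalisation forces the density to be `1` at `0`.
  have h_law (n : ℕ) : ∀ᵐ ω ∂μ, ∀ᵐ x ∂κ (n + 1) ω, ξ n ω = 0 → x = 0 := by
    have h_fst : MeasurableSet[(𝒢 (n + 1)).prod mE] {q : Ω × E | ξ n q.1 = 0} :=
      (h.measurable_increment n).comp measurable_fst (measurableSet_singleton 0)
    have h_snd : MeasurableSet[(𝒢 (n + 1)).prod mE] {q : Ω × E | q.2 = 0} :=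
      measurable_snd (measurableSet_singleton 0)
    exact ((h.isCondLaw (n + 1)).ae_ae_iff (𝒢.le _) (h.measurable (n + 1)) (h_fst.imp h_snd)).2
      (h_absorb.mono fun ω hω => hω n)
  filter_upwards [ae_all_iff.2 h_law, ae_all_iff.2 h.lintegral_eq_one, h_absorb]
    with ω h_law h_one h_absorb n hn
  have h_const : ∀ᵐ x ∂κ (n + 1) ω, z (n + 1) ω x = z (n + 1) ω 0 :=
    (h_law n).mono fun x hx => by rw [hx hn]
  rw [h_absorb n hn, ← h_one (n + 1), lintegral_congr_ae h_const]
  simp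

theorem tendsto_setLIntegral_ne_zero [Zero E] [MeasurableSingletonClass E]
    (h : IsTransitionDensity 𝒢 μ ξ κ z) (hw : Measurable[𝒢 0] w) (hw_int : ∫⁻ ω, w ω ∂μ ≠ ∞)
    {ε : ℕ → ℝ≥0∞} (hε : Tendsto ε atTop (𝓝 0))
    (hzε : ∀ n, ∀ᵐ ω ∂μ, (κ n ω).withDensity (z n ω) {0}ᶜ ≤ ε n) :
    Tendsto (fun n => ∫⁻ ω in {ω | ξ n ω = 0}ᶜ, densityProd w z ξ (n + 1) ω ∂μ) atTop
      (𝓝 0) := by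
  have h_bound : Tendsto (fun n => ε n * ∫⁻ ω, w ω ∂μ) atTop (𝓝 0) := by
    simpa using ENNReal.Tendsto.mul_const hε (.inr hw_int)
  refine tendsto_of_tendsto_of_tendsto_of_le_of_le tendsto_const_nhds h_bound
    (fun _ => bot_le) fun n => ?_
  let μ' : Measure Ω := μ.withDensity (densityProd w z ξ (n + 1))
  have hS : MeasurableSet {ω | ξ n ω = 0} := h.measurable n (measurableSet_singleton 0)
  have h_law := h.isCondLaw_withDensity_densityProd hw n
  calc ∫⁻ ω in {ω | ξ n ω = 0}ᶜ, densityProd w z ξ (n + 1) ω ∂μ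
      = ∫⁻ ω, (κ n ω).withDensity (z n ω) {0}ᶜ ∂μ' := by
        have h_comp := h_law.lintegral_comp (𝒢.le n)
          (measurable_one.indicator (measurableSet_singleton (0 : E)).compl)
        simp only [lintegral_indicator_one (measurableSet_singleton (0 : E)).compl] at h_comp
        rw [← withDensity_apply _ hS.compl, ← h_comp, ← lintegral_indicator_one hS.compl]
        rfl
    _ ≤ ∫⁻ _, ε n ∂μ' :=
        lintegral_mono_ae ((withDensity_absolutelyContinuous _ _).ae_le (hzε n))
    _ = ε n * ∫⁻ ω, w ω ∂μ := by
        rw [lintegral_const, h.withDensity_densityProd_apply hw (Nat.zero_le _) .univ,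
          densityProd_zero, withDensity_apply _ .univ, setLIntegral_univ]

theorem ae_densityProd_eq_limsup [Zero E] [MeasurableSingletonClass E]
    (h : IsTransitionDensity 𝒢 μ ξ κ z) (hκ : ∀ n ω, IsProbabilityMeasure (κ n ω))
    (h_absorb : ∀ᵐ ω ∂μ, ∀ n, ξ n ω = 0 → ξ (n + 1) ω = 0) (w : Ω → ℝ≥0∞) :
    ∀ᵐ ω ∂μ, ∀ n, ξ n ω = 0 → densityProd w z ξ (n + 1) ω =
      limsup (fun k => densityProd w z ξ k ω) atTop := by
  filter_upwards [h_absorb, h.ae_density_eq_one_of_eq_zero hκ h_absorb] with ω h_absorb h_one n hn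
  have h_zero (k : ℕ) (hk : n ≤ k) : ξ k ω = 0 := Nat.le_induction hn (fun j _ => h_absorb j) k hk
  have h_const (k : ℕ) (hk : n + 1 ≤ k) :
      densityProd w z ξ k ω = densityProd w z ξ (n + 1) ω := by
    refine densityProd_eq_of_le w hk fun j hj => ?_
    obtain ⟨i, rfl⟩ := Nat.exists_eq_succ_of_ne_zero (Nat.ne_zero_of_lt hj)
    exact h_one i (h_zero i (Nat.le_of_succ_le_succ hj))
  have h_tendsto : Tendsto (fun k => densityProd w z ξ k ω) atTop
      (𝓝 (densityProd w z ξ (n + 1) ω)) :=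
    tendsto_const_nhds.congr' ((eventually_ge_atTop (n + 1)).mono fun k hk => (h_const k hk).symm)
  exact h_tendsto.limsup_eq.symm

theorem exists_trim_eq_withDensity_densityProd [Zero E] [MeasurableSingletonClass E]
    (h : IsTransitionDensity 𝒢 μ ξ κ z) (hκ : ∀ n ω, IsProbabilityMeasure (κ n ω))
    (hz : ∀ n, ∀ᵐ ω ∂μ, ∀ᵐ x ∂κ n ω, z n ω x ≠ 0)
    (h_absorb : ∀ᵐ ω ∂μ, ∀ n, ξ n ω = 0 → ξ (n + 1) ω = 0) (h_ex : ∀ᵐ ω ∂μ, ∃ n, ξ n ω = 0)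
    {ε : ℕ → ℝ≥0∞} (hε : Tendsto ε atTop (𝓝 0))
    (hzε : ∀ n, ∀ᵐ ω ∂μ, (κ n ω).withDensity (z n ω) {0}ᶜ ≤ ε n)
    (hw : Measurable[𝒢 0] w) (hw_pos : ∀ᵐ ω ∂μ, w ω ≠ 0) (hw_int : ∫⁻ ω, w ω ∂μ ≠ ∞) :
    ∃ Q : Measure Ω, Q ≪ μ ∧ μ ≪ Q ∧ ∀ n, Q.trim (𝒢.le n) =
      (μ.withDensity (densityProd w z ξ n)).trim (𝒢.le n) := by
  let Y : Ω → ℝ≥0∞ := fun ω => limsup (fun n => densityProd w z ξ n ω) atTop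
  have hY : Measurable Y :=
    .limsup fun n => (h.measurable_densityProd hw n).mono (𝒢.le n) le_rfl
  have h_eq : ∀ᵐ ω ∂μ, ∀ n, ξ n ω = 0 → densityProd w z ξ (n + 1) ω = Y ω :=
    h.ae_densityProd_eq_limsup hκ h_absorb w
  refine ⟨μ.withDensity Y, withDensity_absolutelyContinuous _ _,
    withDensity_absolutelyContinuous' hY.aemeasurable ?_, fun n => ?_⟩
  · filter_upwards [h_eq, h_ex, h.ae_densityProd_ne_zero hw_pos hz] with ω h_eq ⟨n, hn⟩ h_ne
    exact h_eq n hn ▸ h_ne (n + 1)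
  · refine @Measure.ext Ω (𝒢 n) _ _ fun A hA => ?_
    have hA_m0 : MeasurableSet A := 𝒢.le n _ hA
    rw [trim_measurableSet_eq (𝒢.le n) hA, trim_measurableSet_eq (𝒢.le n) hA,
      withDensity_apply _ hA_m0]
    refine tendsto_nhds_unique (tendsto_setLIntegral_of_eq_on_monotone hY
      (fun k => h.measurable k (measurableSet_singleton 0)) h_absorb h_ex h_eq
      (h.tendsto_setLIntegral_ne_zero hw hw_int hε hzε) hA_m0)
      (tendsto_const_nhds.congr' ((eventually_ge_atTop n).mono fun k hk => ?_))
    rw [← h.withDensity_densityProd_apply hw (hk.trans k.le_succ) hA,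
      withDensity_apply _ hA_m0]

theorem exists_measure_isCondLaw [Zero E] [MeasurableSingletonClass E] [IsFiniteMeasure μ]
    [NeZero μ] (h : IsTransitionDensity 𝒢 μ ξ κ z) (hκ : ∀ n ω, IsProbabilityMeasure (κ n ω))
    (hz : ∀ n, ∀ᵐ ω ∂μ, ∀ᵐ x ∂κ n ω, z n ω x ≠ 0)
    (h_absorb : ∀ᵐ ω ∂μ, ∀ n, ξ n ω = 0 → ξ (n + 1) ω = 0) (h_ex : ∀ᵐ ω ∂μ, ∃ n, ξ n ω = 0)
    {ε : ℕ → ℝ≥0∞} (hε : Tendsto ε atTop (𝓝 0))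
    (hzε : ∀ n, ∀ᵐ ω ∂μ, (κ n ω).withDensity (z n ω) {0}ᶜ ≤ ε n) {V : Ω → ℝ≥0∞}
    (hV : Measurable[𝒢 0] V) (hV_fin : ∀ᵐ ω ∂μ, V ω ≠ ∞) :
    ∃ Q : Measure Ω, IsProbabilityMeasure Q ∧ Q ≪ μ ∧ μ ≪ Q ∧ ∫⁻ ω, V ω ∂Q ≠ ∞ ∧
      ∀ n, IsCondLaw (𝒢 n) Q (ξ n) fun ω => (κ n ω).withDensity (z n ω) := by
  obtain ⟨w, hw, hw_pos, hw_one, hwV⟩ :=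
    exists_measurable_weight_lintegral_mul_ne_top (𝒢.le 0) μ hV hV_fin
  obtain ⟨Q, hQμ, hμQ, hQ_trim⟩ := h.exists_trim_eq_withDensity_densityProd hκ hz h_absorb h_ex
    hε hzε hw hw_pos (hw_one ▸ ENNReal.one_ne_top)
  have hQ_zero {f : Ω → ℝ≥0∞} (hf : Measurable[𝒢 0] f) :
      ∫⁻ ω, f ω ∂Q = ∫⁻ ω, w ω * f ω ∂μ := by
    rw [← lintegral_trim (𝒢.le 0) hf, hQ_trim 0, lintegral_trim (𝒢.le 0) hf, densityProd_zero]
    exact lintegral_withDensity_eq_lintegral_mul _ (hw.mono (𝒢.le 0) le_rfl)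
      (hf.mono (𝒢.le 0) le_rfl)
  refine ⟨Q, ⟨?_⟩, hQμ, hμQ, (hQ_zero hV).trans_ne hwV, fun n => ?_⟩
  · simpa [hw_one] using hQ_zero (f := fun _ => 1) measurable_const
  · exact (h.isCondLaw_withDensity_densityProd hw n).of_trim_eq (𝒢.mono n.le_succ)
      (𝒢.le (n + 1)) (h.measurable_increment n) (hQ_trim (n + 1)).symm

end IsTransitionDensity

end MeasureChange

theorem eLpNorm_le_eLpNorm_zero_add_tsum {Ω E : Type*} [MeasurableSpace Ω] [NormedAddCommGroup E]
    {μ : Measure Ω} {X : ℕ → Ω → E} (hX : ∀ n, AEStronglyMeasurable (X n) μ) {p : ℝ≥0∞}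
    (hp : 1 ≤ p) (n : ℕ) :
    eLpNorm (X n) p μ ≤ eLpNorm (X 0) p μ + ∑' k, eLpNorm (X (k + 1) - X k) p μ := by
  have h_telescope : X n = X 0 + ∑ k ∈ Finset.range n, (X (k + 1) - X k) := by
    rw [Finset.sum_range_sub, add_sub_cancel]
  have h_meas (k : ℕ) : AEStronglyMeasurable (X (k + 1) - X k) μ := (hX _).sub (hX _)
  calc eLpNorm (X n) p μ
      ≤ eLpNorm (X 0) p μ + eLpNorm (∑ k ∈ Finset.range n, (X (k + 1) - X k)) p μ := by
        conv_lhs => rw [h_telescope]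
        exact eLpNorm_add_le (hX 0) (Finset.aestronglyMeasurable_sum _ fun k _ => h_meas k) hp
    _ ≤ eLpNorm (X 0) p μ + ∑ k ∈ Finset.range n, eLpNorm (X (k + 1) - X k) p μ := by
        gcongr
        exact eLpNorm_sum_le (fun k _ => h_meas k) hp
    _ ≤ eLpNorm (X 0) p μ + ∑' k, eLpNorm (X (k + 1) - X k) p μ := by
        gcongr
        exact ENNReal.sum_le_tsum _

theorem exists_integral_norm_sq_le {ι Ω E : Type*} [MeasurableSpace Ω] [NormedAddCommGroup E]
    {μ : Measure Ω} {X : ι → Ω → E} (hX : ∀ i, AEStronglyMeasurable (X i) μ) {M : ℝ≥0∞}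
    (hM : M ≠ ∞) (h : ∀ i, eLpNorm (X i) 2 μ ≤ M) : ∃ C : ℝ, ∀ i, ∫ ω, ‖X i ω‖ ^ 2 ∂μ ≤ C := by
  refine ⟨(M ^ 2).toReal, fun i => ?_⟩
  have h_meas : AEStronglyMeasurable (fun ω => ‖X i ω‖ ^ 2) μ := (hX i).norm.pow 2
  rw [integral_eq_lintegral_of_nonneg_ae (ae_of_all _ fun _ => by positivity) h_meas]
  refine ENNReal.toReal_mono (ENNReal.pow_ne_top hM) ?_
  calc ∫⁻ ω, ENNReal.ofReal (‖X i ω‖ ^ 2) ∂μ = eLpNorm (X i) 2 μ ^ 2 := by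
        simp only [eLpNorm_two_sq_eq_lintegral_enorm_sq, ENNReal.ofReal_pow (norm_nonneg _),
          ofReal_norm]
    _ ≤ M ^ 2 := by gcongr; exact h i

theorem exists_eLpNorm_two_le_of_isCondLaw {Ω E : Type*} {m0 : MeasurableSpace Ω}
    [NormedAddCommGroup E] [MeasurableSpace E] [OpensMeasurableSpace E] {𝒢 : ℕ → MeasurableSpace Ω}
    (h𝒢 : ∀ n, 𝒢 n ≤ m0) {Q : Measure Ω} [IsProbabilityMeasure Q] {X : ℕ → Ω → E}
    {κ : ℕ → Ω → Measure E} (hX : ∀ n, AEStronglyMeasurable (X n) Q)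
    (h : ∀ n, IsCondLaw (𝒢 n) Q (X (n + 1) - X n) (κ n))
    (h_init : ∫⁻ ω, ‖X 0 ω‖ₑ ^ 2 ∂Q ≠ ∞) (h_zero : ∫⁻ ω, ∫⁻ x, ‖x‖ₑ ^ 2 ∂κ 0 ω ∂Q ≠ ∞)
    (h_succ : ∀ n, ∀ᵐ ω ∂Q, ∫⁻ x, ‖x‖ₑ ^ 2 ∂κ (n + 1) ω ≤ (2⁻¹ ^ (n + 1)) ^ 2) :
    ∃ M : ℝ≥0∞, M ≠ ∞ ∧ ∀ n, eLpNorm (X n) 2 Q ≤ M := by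
  have h_sq (n : ℕ) : eLpNorm (X (n + 1) - X n) 2 Q ^ 2 = ∫⁻ ω, ∫⁻ x, ‖x‖ₑ ^ 2 ∂κ n ω ∂Q := by
    rw [eLpNorm_two_sq_eq_lintegral_enorm_sq]
    exact (h n).lintegral_comp (h𝒢 n) (g := fun x => ‖x‖ₑ ^ 2) (by fun_prop)
  have h_le (n : ℕ) : eLpNorm (X (n + 2) - X (n + 1)) 2 Q ≤ 2⁻¹ ^ (n + 1) := by
    refine (ENNReal.pow_le_pow_left_iff two_ne_zero).1 ?_
    calc eLpNorm (X (n + 2) - X (n + 1)) 2 Q ^ 2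
        = ∫⁻ ω, ∫⁻ x, ‖x‖ₑ ^ 2 ∂κ (n + 1) ω ∂Q := h_sq (n + 1)
      _ ≤ ∫⁻ _, (2⁻¹ ^ (n + 1)) ^ 2 ∂Q := lintegral_mono_ae (h_succ n)
      _ = (2⁻¹ ^ (n + 1)) ^ 2 := by simp
  have h_tsum : ∑' n, eLpNorm (X (n + 1) - X n) 2 Q ≠ ∞ := by
    rw [tsum_eq_zero_add' ENNReal.summable]
    refine ENNReal.add_ne_top.2 ⟨?_, ne_top_of_le_ne_top ?_ (ENNReal.tsum_le_tsum h_le)⟩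
    · exact fun h_top => h_zero (by rw [← h_sq 0, h_top, ENNReal.top_pow two_ne_zero])
    · simp [ENNReal.tsum_geometric_add_one]
  refine ⟨eLpNorm (X 0) 2 Q + ∑' n, eLpNorm (X (n + 1) - X n) 2 Q,
    ENNReal.add_ne_top.2 ⟨?_, h_tsum⟩, eLpNorm_le_eLpNorm_zero_add_tsum hX one_le_two⟩
  exact ((memLp_two_iff_lintegral_enorm_sq_ne_top (hX 0)).2 h_init).eLpNorm_ne_top

theorem martingale_of_isCondLaw {Ω E : Type*} {m0 : MeasurableSpace Ω} [NormedAddCommGroup E]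
    [NormedSpace ℝ E] [CompleteSpace E] [MeasurableSpace E] [OpensMeasurableSpace E]
    {𝒢 : Filtration ℕ m0} {Q : Measure Ω} [IsFiniteMeasure Q] {X : ℕ → Ω → E}
    {κ : ℕ → Ω → Measure E} (hX : StronglyAdapted 𝒢 X) (hX_int : ∀ n, Integrable (X n) Q)
    (h : ∀ n, IsCondLaw (𝒢 n) Q (X (n + 1) - X n) (κ n))
    (hκ_int : ∀ n, ∀ᵐ ω ∂Q, Integrable (fun x => x) (κ n ω))
    (hκ_mean : ∀ n, ∀ᵐ ω ∂Q, ∫ x, x ∂κ n ω = 0) : Martingale X 𝒢 Q := by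
  refine martingale_of_setIntegral_eq_succ hX hX_int fun n A hA => ?_
  have h_zero : ∫ ω in A, (X (n + 1) - X n) ω ∂Q = 0 :=
    (h n).setIntegral_eq_zero (𝒢.le n) ((hX_int _).sub (hX_int _)) (hκ_int n) (hκ_mean n) hA
  rw [integral_sub' (hX_int _).integrableOn (hX_int _).integrableOn, sub_eq_zero] at h_zero
  exact h_zero.symm

section Assembly

variable {Ω E : Type*} {m0 : MeasurableSpace Ω} [NormedAddCommGroup E] [NormedSpace ℝ E]
  [FiniteDimensional ℝ E] [MeasurableSpace E] [BorelSpace E] {𝒢 : Filtration ℕ m0}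
  {μ : Measure Ω}

theorem exists_isTransitionDensity_isCenteringDensity {ξ : ℕ → Ω → E}
    (κ : ∀ n, Kernel[𝒢 n] Ω E) [∀ n, IsMarkovKernel (κ n)]
    (hξ : ∀ n, Measurable[𝒢 (n + 1)] (ξ n)) (hκ : ∀ n, IsCondLaw (𝒢 n) μ (ξ n) (κ n))
    (h_arb : ∀ n, ∀ᵐ ω ∂μ, NoArbitrage (κ n ω)) (h_atom : ∀ n, ∀ᵐ ω ∂μ, κ (n + 1) ω {0} ≠ 0)
    {ε : ℕ → ℝ≥0∞} (hε_zero : ε 0 = 1) (hε_ne : ∀ n, ε n ≠ 0) (hε_le : ∀ n, ε n ≤ 1) :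
    ∃ z : ℕ → Ω → E → ℝ≥0∞, IsTransitionDensity 𝒢 μ ξ (fun n => κ n) z ∧
      (∀ n, ∀ᵐ ω ∂μ, IsCenteringDensity (κ n ω) (z n ω)) ∧
      (∀ n, ∀ᵐ ω ∂μ, (κ n ω).withDensity (z n ω) {0}ᶜ ≤ ε n) ∧
      ∀ n, ∀ᵐ ω ∂μ, ∫⁻ x, ‖x‖ₑ ^ 2 ∂(κ (n + 1) ω).withDensity (z (n + 1) ω) ≤ ε (n + 1) := by
  choose z hz_meas hz using fun n =>
    exists_measurable_isCenteringDensity_concentrated (κ n) (hε_ne n) (hε_le n)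
  have h_center (n : ℕ) : ∀ᵐ ω ∂μ, IsCenteringDensity (κ n ω) (z n ω) :=
    (h_arb n).mono fun ω hω => (hz n ω hω).1
  have h_conc (n : ℕ) : ∀ᵐ ω ∂μ, (κ (n + 1) ω).withDensity (z (n + 1) ω) {0}ᶜ ≤ ε (n + 1) ∧
      ∫⁻ x, ‖x‖ₑ ^ 2 ∂(κ (n + 1) ω).withDensity (z (n + 1) ω) ≤ ε (n + 1) := by
    filter_upwards [h_arb (n + 1), h_atom n] with ω hω_arb hω_atom
    exact (hz (n + 1) ω hω_arb).2 hω_atom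
  refine ⟨z, ⟨hξ, hκ, hz_meas, fun n => (h_center n).mono fun ω hω => ?_⟩, h_center, fun n => ?_,
    fun n => (h_conc n).mono fun ω hω => hω.2⟩
  · simpa using hω.isProbabilityMeasure.measure_univ
  · cases n with
    | zero =>
      filter_upwards [h_center 0] with ω hω
      have := hω.isProbabilityMeasure
      exact prob_le_one.trans_eq hε_zero.symm
    | succ n => exact (h_conc n).mono fun ω hω => hω.1

theorem exists_martingale_measure_of_isCondLaw [IsProbabilityMeasure μ] {X : ℕ → Ω → E}
    (hX : Adapted 𝒢 X) (κ : ∀ n, Kernel[𝒢 n] Ω E) [∀ n, IsMarkovKernel (κ n)]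
    (hκ : ∀ n, IsCondLaw (𝒢 n) μ (X (n + 1) - X n) (κ n))
    (h_arb : ∀ n, ∀ᵐ ω ∂μ, NoArbitrage (κ n ω)) (h_atom : ∀ n, ∀ᵐ ω ∂μ, κ (n + 1) ω {0} ≠ 0)
    (h_absorb : ∀ᵐ ω ∂μ, ∀ n, (X (n + 1) - X n) ω = 0 → (X (n + 2) - X (n + 1)) ω = 0)
    (h_ex : ∀ᵐ ω ∂μ, ∃ n, (X (n + 1) - X n) ω = 0) :
    ∃ Q : Measure Ω, IsProbabilityMeasure Q ∧ Q ≪ μ ∧ μ ≪ Q ∧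
      Martingale X 𝒢 Q ∧ ∃ C : ℝ, ∀ n : ℕ, ∫ ω, ‖X n ω‖ ^ 2 ∂Q ≤ C := by
  have hX_meas (n : ℕ) : Measurable (X n) := (hX n).mono (𝒢.le n) le_rfl
  have hξ (n : ℕ) : Measurable[𝒢 (n + 1)] (X (n + 1) - X n) :=
    (hX (n + 1)).sub ((hX n).mono (𝒢.mono n.le_succ) le_rfl)
  obtain ⟨z, h, h_center, h_conc, h_moment⟩ := exists_isTransitionDensity_isCenteringDensity κ hξ hκ
    h_arb h_atom (ε := fun n => (2⁻¹ ^ n) ^ 2) (by simp) (by simp) (by simp [pow_le_one'])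
  have hε : Tendsto (fun n : ℕ => ((2 : ℝ≥0∞)⁻¹ ^ n) ^ 2) atTop (𝓝 0) := by
    simpa using ENNReal.Tendsto.pow (n := 2)
      (ENNReal.tendsto_pow_atTop_nhds_zero_of_lt_one (ENNReal.inv_lt_one.2 ENNReal.one_lt_two))
  have h_sq : Measurable fun x : E => ‖x‖ₑ ^ 2 := by fun_prop
  let V : Ω → ℝ≥0∞ := fun ω => ‖X 0 ω‖ₑ ^ 2 + ∫⁻ x, ‖x‖ₑ ^ 2 ∂(κ 0 ω).withDensity (z 0 ω)
  have hV : Measurable[𝒢 0] V := (h_sq.comp (hX 0)).add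
    ((h.isCondLaw_withDensity_densityProd (w := 1) measurable_const 0).measurable_lintegral
      (h_sq.comp measurable_snd))
  have hV_fin : ∀ᵐ ω ∂μ, V ω ≠ ∞ := (h_center 0).mono fun ω hω =>
    ENNReal.add_ne_top.2 ⟨by simp, hω.lintegral_enorm_sq_ne_top⟩
  obtain ⟨Q, hQ, hQμ, hμQ, hV_int, h_law⟩ := h.exists_measure_isCondLaw (fun n ω => inferInstance)
    (fun n => (h_center n).mono fun ω hω => hω.ae_ne_zero) h_absorb h_ex hε h_conc hV hV_fin
  have h_center_Q (n : ℕ) : ∀ᵐ ω ∂Q, IsCenteringDensity (κ n ω) (z n ω) := hQμ.ae_le (h_center n)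
  have hX_sm (n : ℕ) : AEStronglyMeasurable (X n) Q := (hX_meas n).aestronglyMeasurable
  obtain ⟨M, hM, hX_le⟩ : ∃ M : ℝ≥0∞, M ≠ ∞ ∧ ∀ n, eLpNorm (X n) 2 Q ≤ M := by
    refine exists_eLpNorm_two_le_of_isCondLaw 𝒢.le hX_sm h_law ?_ ?_
      fun n => hQμ.ae_le (h_moment n)
    · exact ne_top_of_le_ne_top hV_int (lintegral_mono fun ω => le_self_add)
    · exact ne_top_of_le_ne_top hV_int (lintegral_mono fun ω => le_add_self)
  refine ⟨Q, hQ, hQμ, hμQ, martingale_of_isCondLaw hX.stronglyAdapted (fun n => ?_) h_law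
    (fun n => (h_center_Q n).mono fun ω hω => hω.integrable_id)
    (fun n => (h_center_Q n).mono fun ω hω => hω.integral_eq_zero),
    exists_integral_norm_sq_le hX_sm hM hX_le⟩
  exact MemLp.integrable one_le_two ⟨hX_sm n, (hX_le n).trans_lt hM.lt_top⟩

end Assembly

theorem ae_measure_singleton_ne_zero_of_condExp_pos {Ω E : Type*} {m m0 : MeasurableSpace Ω}
    [MeasurableSpace E] [MeasurableSingletonClass E] {μ : Measure Ω} {S : Set Ω} {ξ : Ω → E}
    {κ : Kernel[m] Ω E} [IsMarkovKernel κ] {a : E} (hm : m ≤ m0) (hS : MeasurableSet[m] S)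
    (hξ : Measurable ξ) (h : IsCondLaw m μ ξ κ) (h_const : ∀ᵐ ω ∂μ, ω ∈ S → ξ ω = a)
    (h_cond : (fun ω => (κ ω {a}).toReal) =ᵐ[μ]
      μ[indicator {ω | ξ ω = a} (fun _ => (1 : ℝ)) | m])
    (h_pos : ∀ᵐ ω ∂μ, ω ∉ S → 0 < (μ[indicator {ω | ξ ω = a} (fun _ => (1 : ℝ)) | m]) ω) :
    ∀ᵐ ω ∂μ, κ ω {a} ≠ 0 := by
  have h_law : ∀ᵐ ω ∂μ, ∀ᵐ x ∂κ ω, ω ∈ S → x = a :=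
    (h.ae_ae_iff hm hξ ((measurable_fst hS).imp (measurable_snd (measurableSet_singleton a)))).2
      h_const
  filter_upwards [h_law, h_cond, h_pos] with ω h_law h_cond h_pos h_zero
  by_cases hω : ω ∈ S
  · have h_one : κ ω {a} = 1 := (prob_compl_eq_zero_iff (measurableSet_singleton a)).1
      (h_law.mono fun x hx => hx hω)
    simp [h_zero] at h_one
  · exact (h_pos hω).ne (by simpa [h_zero] using h_cond)

theorem exists_equivalent_martingale_measure_general {Ω E : Type*} [m0 : MeasurableSpace Ω]
    [NormedAddCommGroup E] [NormedSpace ℝ E] [FiniteDimensional ℝ E] [MeasurableSpace E]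
    [BorelSpace E] (μ : Measure Ω) [IsProbabilityMeasure μ] (𝒢 : Filtration ℕ m0)
    (X : ℕ → Ω → E) (hX : Adapted 𝒢 X) (κ : ∀ n, Kernel[𝒢 n] Ω E) [∀ n, IsMarkovKernel (κ n)]
    (hκ : ∀ n, ∀ A : Set E, MeasurableSet A → (fun ω => (κ n ω A).toReal) =ᵐ[μ]
      μ[indicator {ω | X (n + 1) ω - X n ω ∈ A} (fun _ => (1 : ℝ)) | 𝒢 n])
    (h_ri : ∀ n, ∀ᵐ ω ∂μ, (0 : E) ∈ intrinsicInterior ℝ (convexHull ℝ (msupport (κ n ω))))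
    (h_absorb : ∀ᵐ ω ∂μ, ∀ n, X (n + 1) ω - X n ω = 0 → X (n + 2) ω - X (n + 1) ω = 0)
    (h_ex : ∀ᵐ ω ∂μ, ∃ n, X (n + 1) ω - X n ω = 0)
    (h_pos : ∀ n, ∀ᵐ ω ∂μ, X (n + 1) ω - X n ω ≠ 0 →
      0 < (μ[indicator {ω | X (n + 2) ω - X (n + 1) ω = 0} (fun _ => (1 : ℝ)) | 𝒢 (n + 1)]) ω) :
    ∃ Q : Measure Ω, IsProbabilityMeasure Q ∧ Q ≪ μ ∧ μ ≪ Q ∧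
      Martingale X 𝒢 Q ∧ ∃ C : ℝ, ∀ n, ∫ ω, ‖X n ω‖ ^ 2 ∂Q ≤ C := by
  have hξ (n : ℕ) : Measurable[𝒢 (n + 1)] (X (n + 1) - X n) :=
    (hX (n + 1)).sub ((hX n).mono (𝒢.mono n.le_succ) le_rfl)
  have hξ_m0 (n : ℕ) : Measurable (X (n + 1) - X n) := (hξ n).mono (𝒢.le _) le_rfl
  have h_law (n : ℕ) : IsCondLaw (𝒢 n) μ (X (n + 1) - X n) (κ n) :=
    isCondLaw_of_condExp (𝒢.le n) (hξ_m0 n) (κ n) (hκ n)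
  have h_arb (n : ℕ) : ∀ᵐ ω ∂μ, NoArbitrage (κ n ω) :=
    (h_ri n).mono fun ω hω => noArbitrage_of_zero_mem_intrinsicInterior hω
  have h_atom (n : ℕ) : ∀ᵐ ω ∂μ, κ (n + 1) ω {0} ≠ 0 :=
    ae_measure_singleton_ne_zero_of_condExp_pos (𝒢.le (n + 1)) (hξ n (measurableSet_singleton 0))
      (hξ_m0 (n + 1)) (h_law (n + 1)) (h_absorb.mono fun ω hω => hω n)
      (hκ (n + 1) {0} (measurableSet_singleton 0)) (h_pos n)
  exact exists_martingale_measure_of_isCondLaw hX κ h_law h_arb h_atom h_absorb h_ex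

/-- **Existence of an equivalent martingale measure** (Lemma 1 of Kabanov–Stricker, as used in
the paper). Let `(G_n)` be a filtration and `(X_n)` an adapted `d`-dimensional process with
increments `ξ_{n+1} := X_{n+1} − X_n`; let `ν (n+1)` be a regular conditional law of `ξ_{n+1}`
given `G_n`. If (i) a.s. `0` lies in the relative interior of the convex hull of the support of
the conditional law of each increment, (ii) the indicators `1_{{ξ_n = 0}}` increase to `1`
almost surely, and (iii) `P[ξ_{n+1} = 0 | G_n] > 0` a.s. on `{ξ_n ≠ 0}`, then there is a
probability measure `Q ∼ P` such that `X` is a `Q`-martingale, bounded in `L²(Q)`. -/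
theorem exists_equivalent_martingale_measure
    {Ω : Type*} [m0 : MeasurableSpace Ω] (μ : Measure Ω) [IsProbabilityMeasure μ]
    {d : ℕ} (hd : 1 ≤ d)
    (𝒢 : Filtration ℕ m0)
    (X : ℕ → Ω → Fin d → ℝ)
    (hX_adapted : Adapted 𝒢 X)
    -- `ν (n+1)` is a regular conditional law of `ξ_{n+1} = X_{n+1} − X_n` given `𝒢 n`
    (ν : ℕ → Ω → Measure (Fin d → ℝ))
    (hν_prob : ∀ n ω, IsProbabilityMeasure (ν n ω))
    (hν_meas : ∀ n : ℕ, ∀ A : Set (Fin d → ℝ), MeasurableSet A →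
      Measurable[𝒢 n] fun ω => ν (n + 1) ω A)
    (hν_cond : ∀ n : ℕ, ∀ A : Set (Fin d → ℝ), MeasurableSet A →
      (fun ω => (ν (n + 1) ω A).toReal) =ᵐ[μ]
        μ[Set.indicator {ω' | X (n + 1) ω' - X n ω' ∈ A} (fun _ => (1 : ℝ)) | 𝒢 n])
    -- (i): `0 ∈ ri conv supp L(ξ_{n+1} | 𝒢 n)` a.s.
    (h_ri : ∀ n : ℕ, ∀ᵐ ω ∂μ,
      (0 : Fin d → ℝ) ∈ intrinsicInterior ℝ (convexHull ℝ (msupport (ν (n + 1) ω))))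
    -- (ii): the indicators `1_{{ξ_n = 0}}` increase to `1` a.s.
    (h_incr : ∀ᵐ ω ∂μ,
      (∀ n : ℕ, X (n + 1) ω - X n ω = 0 → X (n + 2) ω - X (n + 1) ω = 0) ∧
      (∃ n : ℕ, X (n + 1) ω - X n ω = 0))
    -- (iii): `P[ξ_{n+2} = 0 | 𝒢 (n+1)] > 0` a.s. on `{ξ_{n+1} ≠ 0}`
    (h_zero : ∀ n : ℕ, ∀ᵐ ω ∂μ, X (n + 1) ω - X n ω ≠ 0 →
      0 < (μ[Set.indicator {ω' | X (n + 2) ω' - X (n + 1) ω' = 0} (fun _ => (1 : ℝ)) |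
            𝒢 (n + 1)]) ω) :
    ∃ Q : Measure Ω, IsProbabilityMeasure Q ∧ Q ≪ μ ∧ μ ≪ Q ∧
      Martingale X 𝒢 Q ∧ ∃ C : ℝ, ∀ n : ℕ, ∫ ω, ‖X n ω‖ ^ 2 ∂Q ≤ C := by
  let κ (n : ℕ) : Kernel[𝒢 n] Ω (Fin d → ℝ) :=
    @Kernel.mk _ _ (𝒢 n) _ (ν (n + 1))
      (@Measure.measurable_of_measurable_coe _ _ _ (𝒢 n) _ (hν_meas n))
  have (n : ℕ) : IsMarkovKernel (κ n) := ⟨hν_prob (n + 1)⟩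
  exact exists_equivalent_martingale_measure_general μ 𝒢 X hX_adapted κ hν_cond h_ri
    (h_incr.mono fun ω hω => hω.1) (h_incr.mono fun ω hω => hω.2) h_zero
end
end

section
/- Stickiness is preserved under composition with a continuous function: if the continuous, adapted, (0,∞)^d-valued process S is sticky and g : (0,∞)^d → (0,∞)^{d'} is a continuous function, then the process (g(S_t))_{t∈[0,T]} is sticky. -/
open MeasureTheory Set Filter ProbabilityTheory

noncomputable section

/-- `Sstar T S τ ω = sup_{u ∈ [τ(ω), T]} ‖S_u(ω) - S_{τ(ω)}(ω)‖`, where the norm on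
`Fin k → ℝ` is the sup norm `‖x‖ = max_i |x i|`. -/
def Sstar {Ω : Type*} {k : ℕ} (T : ℝ) (S : ℝ → Ω → Fin k → ℝ) (τ : Ω → ℝ) (ω : Ω) : ℝ :=
  ⨆ u : Set.Icc (τ ω) T, ‖S (u : ℝ) ω - S (τ ω) ω‖

/-- A `k`-dimensional process `Y` is sticky: for every deterministic `t ∈ [0,T)` and every
`δ > 0`, the conditional probability `P[Y*_t < δ | F_t]` is almost surely positive. -/
def Sticky {Ω : Type*} {k : ℕ} [m0 : MeasurableSpace Ω] (μ : Measure Ω) (T : ℝ)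
    (ℱ : Filtration ℝ m0) (Y : ℝ → Ω → Fin k → ℝ) : Prop :=
  ∀ t ∈ Set.Ico (0 : ℝ) T, ∀ δ > (0 : ℝ),
    ∀ᵐ ω ∂μ,
      0 < (μ[Set.indicator {ω' | Sstar T Y (fun _ => t) ω' < δ} (fun _ => (1 : ℝ)) | ℱ t]) ω

/-!
Fix `t` and `δ`. Continuity of `g` gives each starting value `S_t ω` a radius `1 / (n + 1)` within
which `g` moves by at most `δ / 2`, so that `S*_t < 1 / (n + 1)` forces `(g ∘ S)*_t < δ`. For fixed
`n`, the starting values that admit this radius form a relatively closed set, so the event that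
`S_t` lies in it belongs to `F_t`. On this event, `P[(g ∘ S)*_t < δ | F_t]` dominates
`P[S*_t < 1 / (n + 1) | F_t] > 0`, and countably many such events cover `Ω`.
-/

section ModulusOfContinuity

variable {X Y : Type*} [PseudoMetricSpace X] [PseudoMetricSpace Y] {f : X → Y}

/-- The points at which `r` is an admissible radius for `ε` in the definition of continuity of `f`.
The inequality `≤ ε` is weak and `< r` strict so that this set is closed for continuous `f`. -/
def modulusSet (f : X → Y) (ε r : ℝ) : Set X :=
  {x | ∀ y, dist y x < r → dist (f y) (f x) ≤ ε}

lemma isClosed_modulusSet (hf : Continuous f) (ε r : ℝ) : IsClosed (modulusSet f ε r) := by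
  simp only [modulusSet, ofPred_forall, imp_iff_not_or, not_lt, ofPred_or]
  exact isClosed_iInter fun y =>
    (isClosed_le continuous_const (continuous_const.dist continuous_id)).union
      (isClosed_le (continuous_const.dist hf) continuous_const)

lemma iUnion_modulusSet_eq_univ (hf : Continuous f) {ε : ℝ} (hε : 0 < ε) :
    ⋃ n : ℕ, modulusSet f ε (1 / (n + 1)) = univ := by
  refine eq_univ_of_forall fun x => mem_iUnion.2 ?_
  obtain ⟨r, hr, hfr⟩ := Metric.continuous_iff.1 hf x ε hε
  obtain ⟨n, hn⟩ := exists_nat_one_div_lt hr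
  exact ⟨n, fun y hy => (hfr y (hy.trans hn)).le⟩

end ModulusOfContinuity

section ConditionalProbability

variable {Ω : Type*} {m m0 : MeasurableSpace Ω} {μ : Measure Ω} [IsFiniteMeasure μ]

lemma ae_condExp_indicator_le_of_inter_subset (hm : m ≤ m0) {A B C : Set Ω}
    (hA : MeasurableSet[m] A) (hB : MeasurableSet B) (hC : MeasurableSet C) (hABC : A ∩ B ⊆ C) :
    ∀ᵐ ω ∂μ, ω ∈ A →
      (μ[B.indicator (fun _ => (1 : ℝ)) | m]) ω ≤ (μ[C.indicator (fun _ => (1 : ℝ)) | m]) ω := by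
  have integrable_one {s : Set Ω} (hs : MeasurableSet s) :
      Integrable (s.indicator fun _ => (1 : ℝ)) μ := (integrable_const 1).indicator hs
  have indicator_le : A.indicator (B.indicator fun _ => (1 : ℝ)) ≤ C.indicator fun _ => 1 := by
    rw [indicator_indicator]
    exact indicator_le_indicator_of_subset hABC fun _ => zero_le_one
  have condExp_le := condExp_mono (m := m) ((integrable_one hB).indicator (hm _ hA))
    (integrable_one hC) (ae_of_all μ indicator_le)
  filter_upwards [condExp_indicator (integrable_one hB) hA, condExp_le] with ω h_pull h_le hω
  rwa [h_pull, indicator_of_mem hω] at h_le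

lemma ae_condExp_indicator_pos_of_iUnion_eq_univ (hm : m ≤ m0) {ι : Type*} [Countable ι]
    {A B : ι → Set Ω} {C : Set Ω} (hA : ∀ i, MeasurableSet[m] (A i))
    (hA_cover : ⋃ i, A i = univ) (hB : ∀ i, MeasurableSet (B i)) (hC : MeasurableSet C)
    (hABC : ∀ i, A i ∩ B i ⊆ C)
    (hB_pos : ∀ i, ∀ᵐ ω ∂μ, 0 < (μ[(B i).indicator (fun _ => (1 : ℝ)) | m]) ω) :
    ∀ᵐ ω ∂μ, 0 < (μ[C.indicator (fun _ => (1 : ℝ)) | m]) ω := by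
  have h_le := ae_all_iff.2 fun i =>
    ae_condExp_indicator_le_of_inter_subset (μ := μ) hm (hA i) (hB i) hC (hABC i)
  filter_upwards [h_le, ae_all_iff.2 hB_pos] with ω h_le h_pos
  obtain ⟨i, hi⟩ := iUnion_eq_univ_iff.1 hA_cover ω
  exact (h_pos i).trans_le (h_le i hi)

end ConditionalProbability

section RunningSupremum

lemma measurable_ciSup_of_continuous {Ω ι α : Type*} [MeasurableSpace Ω] [TopologicalSpace ι]
    [TopologicalSpace.SeparableSpace ι] [ConditionallyCompleteLinearOrder α] [TopologicalSpace α]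
    [OrderTopology α] [SecondCountableTopology α] [MeasurableSpace α] [BorelSpace α]
    {X : ι → Ω → α} (hX : ∀ i, Measurable (X i)) (hX_cont : ∀ ω, Continuous fun i => X i ω) :
    Measurable fun ω => ⨆ i, X i ω := by
  obtain ⟨D, hD_countable, hD_dense⟩ := TopologicalSpace.exists_countable_dense ι
  have : Countable D := hD_countable
  simp only [← hD_dense.ciSup' (hX_cont _)]
  exact .iSup fun i => hX i

lemma continuous_norm_sub_domRestrict {X E : Type*} [TopologicalSpace X]
    [SeminormedAddCommGroup E] {y : X → E} {s : Set X} (hy : ContinuousOn y s) (c : E) :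
    Continuous fun u : s => ‖y u - c‖ :=
  (hy.domRestrict.sub continuous_const).norm

variable {Ω : Type*} {k : ℕ} {T t : ℝ} {Y : ℝ → Ω → Fin k → ℝ}

lemma measurable_Sstar_const [MeasurableSpace Ω] (hY : ∀ u ∈ Icc t T, Measurable (Y u))
    (hY_cont : ∀ ω, ContinuousOn (fun u => Y u ω) (Icc t T)) :
    Measurable (Sstar T Y fun _ => t) :=
  measurable_ciSup_of_continuous
    (fun u => ((hY u u.2).sub (hY t (left_mem_Icc.2 (u.2.1.trans u.2.2)))).norm)
    (fun ω => continuous_norm_sub_domRestrict (hY_cont ω) _)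

lemma norm_sub_le_Sstar_const {ω : Ω} (hY : ContinuousOn (fun u => Y u ω) (Icc t T)) {u : ℝ}
    (hu : u ∈ Icc t T) : ‖Y u ω - Y t ω‖ ≤ Sstar T Y (fun _ => t) ω :=
  le_ciSup (isCompact_range (continuous_norm_sub_domRestrict hY _)).bddAbove (⟨u, hu⟩ : Icc t T)

lemma Sstar_comp_le_of_mem_modulusSet {k' : ℕ} {U : Set (Fin k → ℝ)}
    {g : (Fin k → ℝ) → Fin k' → ℝ} {ε r : ℝ} {ω : Ω} (hε : 0 ≤ ε)
    (hY : ContinuousOn (fun u => Y u ω) (Icc t T)) (hYU : ∀ u ∈ Icc t T, Y u ω ∈ U)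
    (hYt : Y t ω ∈ U) (h_mem : ⟨Y t ω, hYt⟩ ∈ modulusSet (U.domRestrict g) ε r)
    (hr : Sstar T Y (fun _ => t) ω < r) :
    Sstar T (fun u ω => g (Y u ω)) (fun _ => t) ω ≤ ε := by
  refine Real.iSup_le (fun ⟨u, hu⟩ => ?_) hε
  have h_near : dist (Y u ω) (Y t ω) < r := by
    rw [dist_eq_norm]
    exact (norm_sub_le_Sstar_const hY hu).trans_lt hr
  rw [← dist_eq_norm]
  exact h_mem ⟨Y u ω, hYU u hu⟩ h_near

end RunningSupremum

theorem sticky_comp_continuous_general {Ω : Type*} [m0 : MeasurableSpace Ω] {μ : Measure Ω}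
    [IsFiniteMeasure μ] {T : ℝ} {ℱ : Filtration ℝ m0} {d d' : ℕ} {S : ℝ → Ω → Fin d → ℝ}
    (hS_adapted : Adapted ℱ S) (hS_cont : ∀ ω, ContinuousOn (fun t => S t ω) (Icc 0 T))
    {U : Set (Fin d → ℝ)} (hSU : ∀ t ∈ Icc 0 T, ∀ ω, S t ω ∈ U) (hS_sticky : Sticky μ T ℱ S)
    {g : (Fin d → ℝ) → Fin d' → ℝ} (hg : ContinuousOn g U) :
    Sticky μ T ℱ fun t ω => g (S t ω) := by
  intro t ht δ hδ
  have h_sub : Icc t T ⊆ Icc 0 T := Icc_subset_Icc_left ht.1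
  have hS_meas (u : ℝ) : Measurable (S u) := (hS_adapted u).mono (ℱ.le u) le_rfl
  have hS_cont' (ω : Ω) : ContinuousOn (fun u => S u ω) (Icc t T) := (hS_cont ω).mono h_sub
  have hgS_meas (u : ℝ) (hu : u ∈ Icc t T) : Measurable fun ω => g (S u ω) :=
    hg.domRestrict.measurable.comp ((hS_meas u).subtype_mk (h := hSU u (h_sub hu)))
  have hgS_cont (ω : Ω) : ContinuousOn (fun u => g (S u ω)) (Icc t T) :=
    hg.comp (hS_cont' ω) fun u hu => hSU u (h_sub hu) ω
  let start (ω : Ω) : U := ⟨S t ω, hSU t (Ico_subset_Icc_self ht) ω⟩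
  have h_start : Measurable[ℱ t] start := (hS_adapted t).subtype_mk
  let A (n : ℕ) : Set Ω := start ⁻¹' modulusSet (U.domRestrict g) (δ / 2) (1 / (n + 1))
  let B (n : ℕ) : Set Ω := {ω | Sstar T S (fun _ => t) ω < 1 / (n + 1)}
  have hA (n : ℕ) : MeasurableSet[ℱ t] (A n) :=
    h_start (isClosed_modulusSet hg.domRestrict _ _).measurableSet
  have hA_cover : ⋃ n, A n = univ := by
    rw [← preimage_iUnion, iUnion_modulusSet_eq_univ hg.domRestrict (half_pos hδ), preimage_univ]
  have hB (n : ℕ) : MeasurableSet (B n) :=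
    measurableSet_lt (measurable_Sstar_const (fun u _ => hS_meas u) hS_cont') measurable_const
  have hC : MeasurableSet {ω | Sstar T (fun u ω => g (S u ω)) (fun _ => t) ω < δ} :=
    measurableSet_lt (measurable_Sstar_const hgS_meas hgS_cont) measurable_const
  refine ae_condExp_indicator_pos_of_iUnion_eq_univ (ℱ.le t) hA hA_cover hB hC ?_
    fun n => hS_sticky t ht _ Nat.one_div_pos_of_nat
  rintro n ω ⟨h_mem, h_lt⟩
  exact (Sstar_comp_le_of_mem_modulusSet (half_pos hδ).le (hS_cont' ω)
    (fun u hu => hSU u (h_sub hu) ω) _ h_mem h_lt).trans_lt (half_lt_self hδ)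

/-- **Stickiness is preserved under composition with a continuous function.**
If the continuous, adapted, `(0,∞)^d`-valued process `S` is sticky and
`g : (0,∞)^d → (0,∞)^{d'}` is continuous, then the process `(g(S_t))_{t ∈ [0,T]}` is sticky. -/
theorem sticky_comp_continuous
    {Ω : Type*} [m0 : MeasurableSpace Ω] (μ : Measure Ω) [IsProbabilityMeasure μ]
    (T : ℝ) (hT : 0 < T) (ℱ : Filtration ℝ m0)
    -- usual conditions: right-continuity and completeness, and `F_T = F`
    (hF_right : ∀ t : ℝ, (ℱ t : MeasurableSpace Ω) = ⨅ u ∈ Set.Ioi t, ℱ u)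
    (hF_complete : ∀ s : Set Ω, μ s = 0 → MeasurableSet[ℱ 0] s)
    (hF_T : (ℱ T : MeasurableSpace Ω) = m0)
    {d d' : ℕ} (hd : 1 ≤ d) (hd' : 1 ≤ d')
    (S : ℝ → Ω → Fin d → ℝ)
    (hS_adapted : Adapted ℱ S)
    (hS_cont : ∀ ω, Continuous fun t => S t ω)
    (hS_pos : ∀ t ∈ Set.Icc (0 : ℝ) T, ∀ ω, ∀ i, 0 < S t ω i)
    (hS_sticky : Sticky μ T ℱ S)
    (g : (Fin d → ℝ) → Fin d' → ℝ)
    (hg_cont : ContinuousOn g {x | ∀ i, 0 < x i})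
    (hg_pos : ∀ x : Fin d → ℝ, (∀ i, 0 < x i) → ∀ j, 0 < g x j) :
    Sticky μ T ℱ (fun t ω => g (S t ω)) :=
  sticky_comp_continuous_general hS_adapted (fun ω => (hS_cont ω).continuousOn) hS_pos hS_sticky
    hg_cont
end
end

section
/- Let (B_t)_{t∈[0,T]} be a standard one-dimensional Brownian motion with respect to the filtration (F_t)_{t∈[0,T]}, and let s_0 > 0 be a constant. Then the one-dimensional process S_t := s_0 + ∫_0^t |B_s| ds, t ∈ [0,T], which has strictly increasing, continuously differentiable paths, is sticky: for every t ∈ [0,T) and every δ > 0, P[ sup_{u∈[t,T]} |S_u − S_t| < δ | F_t ] > 0 almost surely. -/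
open MeasureTheory Set Filter ProbabilityTheory
open scoped NNReal

noncomputable section

/-- The strictly increasing, continuously differentiable process
`S_t = s₀ + ∫_0^t |B_s| ds`. -/
def Sproc {Ω : Type*} (s₀ : ℝ) (B : ℝ → Ω → ℝ) (t : ℝ) (ω : Ω) : ℝ :=
  s₀ + ∫ s in (0 : ℝ)..t, |B s ω|

/-!
Fix a small `r > 0` and look at `B` along the grid of mesh `r ^ 2`. On each grid interval, with
positive probability given the past, `B` moves towards `0` by an amount in `[r / 2, r]` and has
`∫ |B u - B s| du` of its typical size `r ^ 3`. Such a step increases `∫ |B| du` by at most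
`r ^ 2 * |B s| + O(r ^ 3)` and decreases `r * B ^ 2` by at least `r ^ 2 * |B s| - O(r ^ 3)`, so
`∫ |B| du + r * B ^ 2` grows by `O(r ^ 3)` per step. After `(T - t) / r ^ 2` steps this gives
`∫ u in t..T, |B u| ≤ r * (B t) ^ 2 + O(r)` with positive conditional probability.
-/

open scoped ENNReal

section Measure

variable {Ω : Type*} {m m0 : MeasurableSpace Ω} {μ : Measure Ω}

theorem ae_pos_condExp_indicator (hm : m ≤ m0) [SigmaFinite (μ.trim hm)] {E : Set Ω}
    (hE : MeasurableSet E) (hμE : μ E ≠ ∞)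
    (hpos : ∀ A, MeasurableSet[m] A → μ A ≠ 0 → μ (A ∩ E) ≠ 0) :
    ∀ᵐ ω ∂μ, 0 < (μ[E.indicator (fun _ => (1 : ℝ)) | m]) ω := by
  set g := μ[E.indicator (fun _ => (1 : ℝ)) | m]
  have hA : MeasurableSet[m] {ω | g ω ≤ 0} :=
    measurableSet_le stronglyMeasurable_condExp.measurable measurable_const
  rw [ae_iff]
  simp only [not_lt]
  by_contra hA0
  have hreal_pos : 0 < μ.real ({ω | g ω ≤ 0} ∩ E) :=
    ENNReal.toReal_pos (hpos _ hA hA0) (measure_ne_top_of_subset inter_subset_right hμE)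
  have hreal_eq : ∫ ω in {ω | g ω ≤ 0}, g ω ∂μ = μ.real ({ω | g ω ≤ 0} ∩ E) := by
    rw [setIntegral_condExp hm ((integrable_indicator_iff hE).2 (integrableOn_const hμE)) hA,
      setIntegral_indicator hE, setIntegral_const, smul_eq_mul, mul_one]
  have hnonpos : ∫ ω in {ω | g ω ≤ 0}, g ω ∂μ ≤ 0 :=
    setIntegral_nonpos (hm _ hA) fun _ hω => hω
  exact (hreal_eq ▸ hnonpos).not_gt hreal_pos

theorem setLIntegral_comp_eq_mul_of_indep {β : Type*} [MeasurableSpace β] {X : Ω → β}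
    {f : β → ℝ≥0∞} (hm : m ≤ m0) (hX : Measurable X) (hf : Measurable f)
    (hXm : Indep (MeasurableSpace.comap X inferInstance) m μ) {A : Set Ω}
    (hA : MeasurableSet[m] A) :
    ∫⁻ ω in A, f (X ω) ∂μ = μ A * ∫⁻ x, f x ∂μ.map X := by
  have hmul := lintegral_mul_eq_lintegral_mul_lintegral_of_independent_measurableSpace
    hX.comap_le hm hXm (hf.comp (comap_measurable X))
    ((measurable_const : Measurable[m] fun _ => (1 : ℝ≥0∞)).indicator hA)
  rw [lintegral_indicator_const (hm A hA), one_mul] at hmul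
  rw [lintegral_map hf hX, mul_comm, ← lintegral_indicator (hm A hA)]
  refine Eq.trans (lintegral_congr fun ω => ?_) hmul
  by_cases hω : ω ∈ A <;> simp [hω]

theorem measurable_setLIntegral_Ioc_of_continuousOn {a b : ℝ} (hab : a ≤ b)
    {f : ℝ → Ω → ℝ≥0∞} (hf_cont : ∀ ω, ContinuousOn (fun u => f u ω) (Icc a b))
    (hf_meas : ∀ u ∈ Icc a b, Measurable (f u)) :
    Measurable fun ω => ∫⁻ u in Ioc a b, f u ω := by
  have hproj : Measurable (Function.uncurry fun u ω => f (projIcc a b hab u) ω) :=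
    measurable_uncurry_of_continuous_of_measurable
      (fun ω => (hf_cont ω).domRestrict.comp continuous_projIcc)
      (fun u => hf_meas _ (projIcc a b hab u).2)
  convert hproj.lintegral_prod_left' (μ := volume.restrict (Ioc a b)) using 2 with ω
  refine setLIntegral_congr_fun measurableSet_Ioc fun u hu => ?_
  simp [projIcc_of_mem hab (Ioc_subset_Icc_self hu)]

theorem exists_nat_measure_inter_le_ne_zero (f : Ω → ℝ) {A : Set Ω} (hA : μ A ≠ 0) :
    ∃ N : ℕ, μ (A ∩ {ω | f ω ≤ N}) ≠ 0 := by
  have hcover : ⋃ N : ℕ, A ∩ {ω | f ω ≤ N} = A := by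
    rw [← inter_iUnion, inter_eq_left]
    exact fun ω _ => mem_iUnion.2 (exists_nat_ge (f ω))
  obtain ⟨N, hN⟩ := exists_measure_pos_of_not_measure_iUnion_null (hcover.symm ▸ hA)
  exact ⟨N, hN.ne'⟩

end Measure

theorem lintegral_enorm_gaussianReal_le (v : ℝ≥0) :
    ∫⁻ x, ‖x‖ₑ ∂gaussianReal 0 v ≤ ENNReal.ofReal √v := by
  have hsq : ∫ x, x ^ 2 ∂gaussianReal 0 v = v := by
    have hvar := variance_eq_integral (μ := gaussianReal 0 v) (X := id) aemeasurable_id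
    simpa [variance_id_gaussianReal] using hvar.symm
  calc ∫⁻ x, ‖x‖ₑ ∂gaussianReal 0 v = eLpNorm id 1 (gaussianReal 0 v) := by
        simp [eLpNorm_one_eq_lintegral_enorm]
    _ ≤ eLpNorm id 2 (gaussianReal 0 v) :=
        eLpNorm_le_eLpNorm_of_exponent_le one_le_two aestronglyMeasurable_id
    _ = ENNReal.ofReal √v := by
        rw [(memLp_id_gaussianReal 2).eLpNorm_eq_integral_rpow_norm two_ne_zero
          ENNReal.ofNat_ne_top]
        simp [hsq, Real.sqrt_eq_rpow]

theorem gaussianReal_sq_preimage_div {c : ℝ} (hc : c ≠ 0) {I : Set ℝ} (hI : MeasurableSet I) :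
    gaussianReal 0 (c ^ 2).toNNReal ((· / c) ⁻¹' I) = gaussianReal 0 1 I := by
  have hvar : (c ^ 2).toNNReal / .mk (c ^ 2) (sq_nonneg c) = 1 := by
    rw [Real.toNNReal_of_nonneg (sq_nonneg c)]
    exact div_self fun h => pow_ne_zero 2 hc (congrArg NNReal.toReal h)
  rw [← Measure.map_apply (by fun_prop) hI, gaussianReal_map_div_const, zero_div, hvar]

theorem gaussianReal_Icc_ne_zero (m : ℝ) {v : ℝ≥0} (hv : v ≠ 0) {a b : ℝ} (hab : a < b) :
    gaussianReal m v (Icc a b) ≠ 0 := fun h => by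
  have hvol := gaussianReal_absolutelyContinuous' m hv h
  rw [Real.volume_Icc, ENNReal.ofReal_eq_zero] at hvol
  linarith

/-- The probability that a standard Gaussian variable lies in `[1 / 2, 1]`. By scaling, it is the
probability that the increment of a Brownian motion over a time `c ^ 2` lies between `c / 2` and
`c`, whatever the sign of `c`. -/
def driftProb : ℝ := (gaussianReal 0 1).real (Icc (1 / 2) 1)

theorem integral_abs_le_mul_add_integral_abs_sub {f : ℝ → ℝ} (hf : Continuous f) {a b : ℝ}
    (hab : a ≤ b) :
    ∫ u in a..b, |f u| ≤ (b - a) * |f a| + ∫ u in a..b, |f u - f a| := by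
  have hsub : Continuous fun u => |f u - f a| := by fun_prop
  calc ∫ u in a..b, |f u| ≤ ∫ u in a..b, (|f a| + |f u - f a|) :=
        intervalIntegral.integral_mono_on hab (hf.abs.intervalIntegrable _ _)
          ((continuous_const.add hsub).intervalIntegrable _ _)
          fun u _ => by simpa using abs_add_le (f a) (f u - f a)
    _ = (b - a) * |f a| + ∫ u in a..b, |f u - f a| := by
        rw [intervalIntegral.integral_add intervalIntegrable_const (hsub.intervalIntegrable _ _),
          intervalIntegral.integral_const, smul_eq_mul]

theorem integral_abs_eq_toReal_lintegral_enorm {f : ℝ → ℝ} (hf : Continuous f) {a b : ℝ}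
    (hab : a ≤ b) : ∫ u in a..b, |f u| = (∫⁻ u in Ioc a b, ‖f u‖ₑ).toReal := by
  rw [intervalIntegral.integral_of_le hab,
    ← integral_norm_eq_lintegral_enorm hf.aestronglyMeasurable]
  rfl

theorem iSup_abs_Sproc_sub {Ω : Type*} (s₀ : ℝ) {B : ℝ → Ω → ℝ} {ω : Ω}
    (hB : Continuous fun u => B u ω) {t T : ℝ} (htT : t ≤ T) :
    ⨆ u : Icc t T, |Sproc s₀ B u ω - Sproc s₀ B t ω| = ∫ u in t..T, |B u ω| := by
  have hint : ∀ a b, IntervalIntegrable (fun u => |B u ω|) volume a b :=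
    fun a b => hB.abs.intervalIntegrable a b
  have hdiff : ∀ u : Icc t T, |Sproc s₀ B u ω - Sproc s₀ B t ω| = ∫ x in t..u, |B x ω| := by
    intro u
    rw [Sproc, Sproc, add_sub_add_left_eq_sub,
      intervalIntegral.integral_interval_sub_left (hint _ _) (hint _ _), abs_of_nonneg]
    exact intervalIntegral.integral_nonneg u.2.1 fun _ _ => abs_nonneg _
  simp_rw [hdiff]
  refine IsGreatest.csSup_eq ⟨⟨⟨T, htT, le_rfl⟩, rfl⟩, ?_⟩
  rintro _ ⟨u, rfl⟩
  exact intervalIntegral.integral_mono_interval le_rfl u.2.1 u.2.2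
    (ae_of_all _ fun _ => abs_nonneg _) (hint _ _)

theorem exists_nat_mul_sq_eq_and_mul_lt {L δ : ℝ} (hL : 0 < L) (hδ : 0 < δ) (K : ℝ) :
    ∃ (n : ℕ) (r : ℝ), 0 < r ∧ n * r ^ 2 = L ∧ r * K < δ := by
  have hlim : Tendsto (fun n : ℕ => √(L / n) * K) atTop (nhds 0) := by
    simpa using (tendsto_const_div_atTop_nhds_zero_nat L).sqrt.mul_const K
  obtain ⟨n, hn, hn0⟩ := ((hlim.eventually (gt_mem_nhds hδ)).and (eventually_gt_atTop 0)).exists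
  have hn0' : (0 : ℝ) < n := Nat.cast_pos.2 hn0
  refine ⟨n, √(L / n), Real.sqrt_pos.2 (div_pos hL hn0'), ?_, hn⟩
  rw [Real.sq_sqrt (div_pos hL hn0').le, mul_div_cancel₀ L hn0'.ne']

theorem sq_mul_abs_add_abs_mul_sq_le {c x y : ℝ} (hc : c ≠ 0) (hcx : c * x ≤ 0)
    (hy : (y - x) / c ∈ Icc (1 / 2) 1) :
    c ^ 2 * |x| + |c| * y ^ 2 ≤ |c| * x ^ 2 + |c| ^ 3 := by
  obtain ⟨z, rfl⟩ : ∃ z, y = x + c * z := ⟨(y - x) / c, by field_simp; ring⟩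
  obtain ⟨hz₁, hz₂⟩ : z ∈ Icc (1 / 2) 1 := by simpa [mul_div_cancel_left₀ z hc] using hy
  have hsq : (x + c * z) ^ 2 ≤ x ^ 2 - |c| * |x| + |c| ^ 2 := by
    rw [← abs_mul, abs_of_nonpos hcx, sq_abs]
    nlinarith [mul_nonneg (sub_nonneg.2 hz₁) (neg_nonneg.2 hcx),
      mul_le_mul_of_nonneg_left (pow_le_one₀ (by linarith) hz₂ : z ^ 2 ≤ 1) (sq_nonneg c)]
  calc c ^ 2 * |x| + |c| * (x + c * z) ^ 2
      ≤ c ^ 2 * |x| + |c| * (x ^ 2 - |c| * |x| + |c| ^ 2) := by gcongr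
    _ = |c| * x ^ 2 + |c| ^ 3 := by rw [← sq_abs c]; ring

section Brownian

variable {Ω : Type*} {m0 : MeasurableSpace Ω}

section Adapted

variable {ℱ : Filtration ℝ m0} {X : ℝ → Ω → ℝ} {s v : ℝ}

theorem measurable_sub_of_adapted (hX : Adapted ℱ X) (hsv : s ≤ v) :
    Measurable[ℱ v] fun ω => X v ω - X s ω :=
  (hX v).sub (hX.measurable_le hsv)

theorem measurable_lintegral_enorm_sub_of_adapted (hX : Adapted ℱ X)
    (hX_cont : ∀ ω, Continuous fun u => X u ω) (hsv : s ≤ v) :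
    Measurable[ℱ v] fun ω => ∫⁻ u in Ioc s v, ‖X u ω - X s ω‖ₑ :=
  measurable_setLIntegral_Ioc_of_continuousOn hsv
    (fun ω => ((hX_cont ω).sub continuous_const).enorm.continuousOn)
    fun _ hu => measurable_enorm.comp
      ((measurable_sub_of_adapted hX hu.1).mono (ℱ.mono hu.2) le_rfl)

theorem measurable_integral_abs_of_adapted (hX : Adapted ℱ X)
    (hX_cont : ∀ ω, Continuous fun u => X u ω) (hsv : s ≤ v) :
    Measurable[ℱ v] fun ω => ∫ u in s..v, |X u ω| := by
  simp_rw [fun ω => integral_abs_eq_toReal_lintegral_enorm (hX_cont ω) hsv]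
  exact (measurable_setLIntegral_Ioc_of_continuousOn hsv
    (fun ω => (hX_cont ω).enorm.continuousOn)
    fun _ hu => measurable_enorm.comp (hX.measurable_le hu.2)).ennreal_toReal

end Adapted

/-- Stickiness on `[0, T]` of the real process `S` with respect to the filtration `ℱ`: at each time
`t < T`, the conditional probability given `ℱ t` that `S` stays within `δ` of `S t` up to time `T`
is almost surely positive. The supremum is taken in `ℝ`, so it is only meaningful for processes
with locally bounded paths. -/
def IsSticky (μ : Measure Ω) (ℱ : Filtration ℝ m0) (T : ℝ) (S : ℝ → Ω → ℝ) : Prop :=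
  ∀ t ∈ Ico 0 T, ∀ δ > (0 : ℝ), ∀ᵐ ω ∂μ,
    0 < (μ[{ω' | (⨆ u : Icc t T, |S u ω' - S t ω'|) < δ}.indicator (fun _ => (1 : ℝ)) | ℱ t]) ω

/-- `B` is a Brownian motion on `[0, T]` with respect to the filtration `ℱ`, with an arbitrary
initial value `B 0`. Times are real numbers, but the law of `B` is prescribed on `[0, T]` only. -/
structure IsBrownianMotionOn (μ : Measure Ω) (ℱ : Filtration ℝ m0) (T : ℝ) (B : ℝ → Ω → ℝ) :
    Prop where
  adapted : Adapted ℱ B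
  continuous (ω : Ω) : Continuous fun t => B t ω
  indep_increment (s t : ℝ) : 0 ≤ s → s ≤ t → t ≤ T →
    Indep (MeasurableSpace.comap (fun ω => B t ω - B s ω) inferInstance) (ℱ s) μ
  map_increment (s t : ℝ) : 0 ≤ s → s ≤ t → t ≤ T →
    μ.map (fun ω => B t ω - B s ω) = gaussianReal 0 (t - s).toNNReal

namespace IsBrownianMotionOn

variable {μ : Measure Ω} {ℱ : Filtration ℝ m0} {T : ℝ} {B : ℝ → Ω → ℝ} {A : Set Ω} {s v : ℝ}

theorem measure_inter_increment_mem (hB : IsBrownianMotionOn μ ℱ T B) (hs : 0 ≤ s) (hsv : s ≤ v)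
    (hvT : v ≤ T) (hA : MeasurableSet[ℱ s] A) {J : Set ℝ} (hJ : MeasurableSet J) :
    μ (A ∩ (fun ω => B v ω - B s ω) ⁻¹' J) = μ A * gaussianReal 0 (v - s).toNNReal J := by
  rw [inter_comm, (Indep_iff _ _ μ).1 (hB.indep_increment s v hs hsv hvT) _ A ⟨J, hJ, rfl⟩ hA,
    mul_comm, ← hB.map_increment s v hs hsv hvT,
    Measure.map_apply ((measurable_sub_of_adapted hB.adapted hsv).mono (ℱ.le v) le_rfl) hJ]

theorem setLIntegral_lintegral_enorm_increment_le [SFinite μ] (hB : IsBrownianMotionOn μ ℱ T B)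
    (hs : 0 ≤ s) (hsv : s ≤ v) (hvT : v ≤ T) (hA : MeasurableSet[ℱ s] A) :
    ∫⁻ ω in A, (∫⁻ u in Ioc s v, ‖B u ω - B s ω‖ₑ) ∂μ
      ≤ μ A * ENNReal.ofReal ((v - s) * √(v - s)) := by
  have hmeas : ∀ u, Measurable (B u) := fun _ => hB.adapted.measurable
  have hjoint : Measurable (Function.uncurry fun u ω => ‖B u ω - B s ω‖ₑ) :=
    measurable_uncurry_of_continuous_of_measurable
      (fun ω => ((hB.continuous ω).sub continuous_const).enorm)
      (fun u => ((hmeas u).sub (hmeas s)).enorm)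
  have hincrement : ∀ u ∈ Ioc s v,
      ∫⁻ ω in A, ‖B u ω - B s ω‖ₑ ∂μ ≤ μ A * ENNReal.ofReal √(v - s) := by
    intro u hu
    rw [setLIntegral_comp_eq_mul_of_indep (X := fun ω => B u ω - B s ω) (ℱ.le s)
      ((hmeas u).sub (hmeas s)) measurable_enorm
      (hB.indep_increment s u hs hu.1.le (hu.2.trans hvT)) hA,
      hB.map_increment s u hs hu.1.le (hu.2.trans hvT)]
    refine mul_le_mul_right ((lintegral_enorm_gaussianReal_le _).trans ?_) _
    rw [Real.coe_toNNReal _ (sub_nonneg.2 hu.1.le)]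
    gcongr
    exact hu.2
  rw [lintegral_lintegral_swap (f := fun ω u => ‖B u ω - B s ω‖ₑ)
    (hjoint.comp measurable_swap).aemeasurable]
  calc ∫⁻ u in Ioc s v, ∫⁻ ω in A, ‖B u ω - B s ω‖ₑ ∂μ
      ≤ ∫⁻ _ in Ioc s v, μ A * ENNReal.ofReal √(v - s) :=
        setLIntegral_mono measurable_const hincrement
    _ = μ A * ENNReal.ofReal ((v - s) * √(v - s)) := by
        rw [setLIntegral_const, Real.volume_Ioc, ENNReal.ofReal_mul (sub_nonneg.2 hsv)]
        ring

-- First moment method: on the event that the increment lies in `J`, the integral is at most its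
-- mean over that event with positive probability.
theorem exists_subset_increment_mem_integral_le [IsFiniteMeasure μ]
    (hB : IsBrownianMotionOn μ ℱ T B) (hs : 0 ≤ s) (hsv : s ≤ v) (hvT : v ≤ T)
    (hA : MeasurableSet[ℱ s] A) (hA0 : μ A ≠ 0) {J : Set ℝ} (hJ : MeasurableSet J)
    (hJ0 : gaussianReal 0 (v - s).toNNReal J ≠ 0) :
    ∃ A' ⊆ A, MeasurableSet[ℱ v] A' ∧ μ A' ≠ 0 ∧ ∀ ω ∈ A', B v ω - B s ω ∈ J ∧
      ∫ u in s..v, |B u ω - B s ω|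
        ≤ (v - s) * √(v - s) / (gaussianReal 0 (v - s).toNNReal).real J := by
  set γ := gaussianReal 0 (v - s).toNNReal
  set f : Ω → ℝ≥0∞ := fun ω => ∫⁻ u in Ioc s v, ‖B u ω - B s ω‖ₑ
  have hf : Measurable[ℱ v] f :=
    measurable_lintegral_enorm_sub_of_adapted hB.adapted hB.continuous hsv
  set D := A ∩ (fun ω => B v ω - B s ω) ⁻¹' J
  have hD : MeasurableSet[ℱ v] D :=
    (ℱ.mono hsv _ hA).inter (measurable_sub_of_adapted hB.adapted hsv hJ)
  have hμD : μ D = μ A * γ J := hB.measure_inter_increment_mem hs hsv hvT hA hJ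
  have hmean : ⨍⁻ ω in D, f ω ∂μ ≤ ENNReal.ofReal ((v - s) * √(v - s)) / γ J := by
    rw [setLAverage_eq, hμD, ← ENNReal.mul_div_mul_left _ (γ J) hA0 (measure_ne_top μ A)]
    exact ENNReal.div_le_div_right ((lintegral_mono_set inter_subset_left).trans
      (hB.setLIntegral_lintegral_enorm_increment_le hs hsv hvT hA)) _
  refine ⟨D ∩ {ω | f ω ≤ ⨍⁻ ω in D, f ω ∂μ}, fun ω hω => hω.1.1,
    hD.inter (measurableSet_le hf measurable_const), ?_, fun ω hω => ⟨hω.1.2, ?_⟩⟩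
  · exact (measure_le_setLAverage_pos (hμD ▸ mul_ne_zero hA0 hJ0) (measure_ne_top μ D)
      (hf.mono (ℱ.le v) le_rfl).aemeasurable).ne'
  · rw [integral_abs_eq_toReal_lintegral_enorm (f := fun u => B u ω - B s ω)
      ((hB.continuous ω).sub continuous_const) hsv]
    have hbound := ENNReal.toReal_mono (ENNReal.div_ne_top ENNReal.ofReal_ne_top hJ0)
      (hω.2.trans hmean)
    rwa [ENNReal.toReal_div, ENNReal.toReal_ofReal
      (mul_nonneg (sub_nonneg.2 hsv) (Real.sqrt_nonneg _))] at hbound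

theorem exists_subset_increment_div_mem_integral_le [IsFiniteMeasure μ]
    (hB : IsBrownianMotionOn μ ℱ T B) (hs : 0 ≤ s) {c : ℝ} (hc : c ≠ 0) (hcT : s + c ^ 2 ≤ T)
    (hA : MeasurableSet[ℱ s] A) (hA0 : μ A ≠ 0) :
    ∃ A' ⊆ A, MeasurableSet[ℱ (s + c ^ 2)] A' ∧ μ A' ≠ 0 ∧ ∀ ω ∈ A',
      (B (s + c ^ 2) ω - B s ω) / c ∈ Icc (1 / 2) 1 ∧
      ∫ u in s..(s + c ^ 2), |B u ω - B s ω| ≤ driftProb⁻¹ * |c| ^ 3 := by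
  have hγ : gaussianReal 0 (s + c ^ 2 - s).toNNReal ((· / c) ⁻¹' Icc (1 / 2) 1)
      = gaussianReal 0 1 (Icc (1 / 2) 1) := by
    rw [add_sub_cancel_left, gaussianReal_sq_preimage_div hc measurableSet_Icc]
  have hbound : (s + c ^ 2 - s) * √(s + c ^ 2 - s) /
      (gaussianReal 0 (s + c ^ 2 - s).toNNReal).real ((· / c) ⁻¹' Icc (1 / 2) 1)
      = driftProb⁻¹ * |c| ^ 3 := by
    rw [measureReal_def, hγ, ← measureReal_def, ← driftProb, add_sub_cancel_left,
      Real.sqrt_sq_eq_abs, ← sq_abs c, ← pow_succ, div_eq_inv_mul]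
  rw [← hbound]
  exact hB.exists_subset_increment_mem_integral_le hs (le_add_of_nonneg_right (sq_nonneg c)) hcT
    hA hA0 (measurableSet_Icc.preimage (by fun_prop : Measurable (· / c)))
    (hγ ▸ gaussianReal_Icc_ne_zero 0 one_ne_zero (by norm_num))

theorem exists_subset_integral_abs_add_mul_sq_le_of_mul_nonpos [IsFiniteMeasure μ]
    (hB : IsBrownianMotionOn μ ℱ T B) (hs : 0 ≤ s) {c : ℝ} (hc : c ≠ 0) (hcT : s + c ^ 2 ≤ T)
    (hA : MeasurableSet[ℱ s] A) (hA0 : μ A ≠ 0) (hcB : ∀ ω ∈ A, c * B s ω ≤ 0) :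
    ∃ A' ⊆ A, MeasurableSet[ℱ (s + c ^ 2)] A' ∧ μ A' ≠ 0 ∧ ∀ ω ∈ A',
      (∫ u in s..(s + c ^ 2), |B u ω|) + |c| * B (s + c ^ 2) ω ^ 2
        ≤ |c| * B s ω ^ 2 + (driftProb⁻¹ + 1) * |c| ^ 3 := by
  obtain ⟨A', hA'A, hA'm, hA'0, hA'⟩ :=
    hB.exists_subset_increment_div_mem_integral_le hs hc hcT hA hA0
  refine ⟨A', hA'A, hA'm, hA'0, fun ω hω => ?_⟩
  obtain ⟨hdrift, hosc⟩ := hA' ω hω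
  have hpath := integral_abs_le_mul_add_integral_abs_sub (hB.continuous ω)
    (le_add_of_nonneg_right (sq_nonneg c) : s ≤ s + c ^ 2)
  rw [add_sub_cancel_left] at hpath
  linarith [sq_mul_abs_add_abs_mul_sq_le hc (hcB ω (hA'A hω)) hdrift]

theorem exists_subset_integral_abs_add_mul_sq_le [IsFiniteMeasure μ]
    (hB : IsBrownianMotionOn μ ℱ T B) (hs : 0 ≤ s) {r : ℝ} (hr : 0 < r) (hrT : s + r ^ 2 ≤ T)
    (hA : MeasurableSet[ℱ s] A) (hA0 : μ A ≠ 0) :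
    ∃ A' ⊆ A, MeasurableSet[ℱ (s + r ^ 2)] A' ∧ μ A' ≠ 0 ∧ ∀ ω ∈ A',
      (∫ u in s..(s + r ^ 2), |B u ω|) + r * B (s + r ^ 2) ω ^ 2
        ≤ r * B s ω ^ 2 + (driftProb⁻¹ + 1) * r ^ 3 := by
  suffices ∃ A₁ ⊆ A, MeasurableSet[ℱ s] A₁ ∧ μ A₁ ≠ 0 ∧
      ∃ c, |c| = r ∧ ∀ ω ∈ A₁, c * B s ω ≤ 0 by
    obtain ⟨A₁, hA₁A, hA₁m, hA₁0, c, rfl, hcB⟩ := this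
    rw [sq_abs] at hrT ⊢
    obtain ⟨A', hA'A₁, hA'⟩ :=
      hB.exists_subset_integral_abs_add_mul_sq_le_of_mul_nonpos hs (abs_pos.1 hr) hrT
        hA₁m hA₁0 hcB
    exact ⟨A', hA'A₁.trans hA₁A, hA'⟩
  have hneg : MeasurableSet[ℱ s] {ω | B s ω < 0} :=
    measurableSet_lt (hB.adapted s) measurable_const
  by_cases hA_neg : μ (A ∩ {ω | B s ω < 0}) = 0
  · have hA_nonneg : μ (A \ {ω | B s ω < 0}) ≠ 0 := by
      rwa [measure_sdiff_null' hA_neg]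
    refine ⟨_, sdiff_subset, hA.diff hneg, hA_nonneg, -r, by rw [abs_neg, abs_of_pos hr],
      fun ω hω => ?_⟩
    exact mul_nonpos_of_nonpos_of_nonneg (neg_nonpos.2 hr.le) (not_lt.1 hω.2)
  · exact ⟨_, inter_subset_left, hA.inter hneg, hA_neg, r, abs_of_pos hr,
      fun ω hω => mul_nonpos_of_nonneg_of_nonpos hr.le hω.2.le⟩

theorem exists_subset_integral_abs_add_mul_sq_le_nat_mul [IsFiniteMeasure μ]
    (hB : IsBrownianMotionOn μ ℱ T B) (hs : 0 ≤ s) {r : ℝ} (hr : 0 < r)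
    (hA : MeasurableSet[ℱ s] A) (hA0 : μ A ≠ 0) (n : ℕ) (hn : s + n * r ^ 2 ≤ T) :
    ∃ A' ⊆ A, MeasurableSet[ℱ (s + n * r ^ 2)] A' ∧ μ A' ≠ 0 ∧ ∀ ω ∈ A',
      (∫ u in s..(s + n * r ^ 2), |B u ω|) + r * B (s + n * r ^ 2) ω ^ 2
        ≤ r * B s ω ^ 2 + n * ((driftProb⁻¹ + 1) * r ^ 3) := by
  induction n with
  | zero =>
    have hzero : s + ((0 : ℕ) : ℝ) * r ^ 2 = s := by simp
    rw [hzero]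
    exact ⟨A, subset_rfl, hA, hA0, fun ω _ => by simp⟩
  | succ n ih =>
    have hsucc : s + ((n + 1 : ℕ) : ℝ) * r ^ 2 = s + n * r ^ 2 + r ^ 2 := by push_cast; ring
    rw [hsucc] at hn ⊢
    obtain ⟨A₁, hA₁A, hA₁m, hA₁0, hA₁⟩ := ih (by linarith [sq_nonneg r])
    obtain ⟨A₂, hA₂A₁, hA₂m, hA₂0, hA₂⟩ :=
      hB.exists_subset_integral_abs_add_mul_sq_le (by positivity) hr hn hA₁m hA₁0
    refine ⟨A₂, hA₂A₁.trans hA₁A, hA₂m, hA₂0, fun ω hω => ?_⟩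
    have hint : ∀ a b, IntervalIntegrable (fun u => |B u ω|) volume a b :=
      fun a b => (hB.continuous ω).abs.intervalIntegrable a b
    rw [← intervalIntegral.integral_add_adjacent_intervals (hint s (s + n * r ^ 2)) (hint _ _)]
    push_cast
    linarith [hA₁ ω (hA₂A₁ hω), hA₂ ω hω]

theorem measure_inter_integral_abs_lt_ne_zero [IsFiniteMeasure μ]
    (hB : IsBrownianMotionOn μ ℱ T B) (hs : 0 ≤ s) (hsT : s < T) {δ : ℝ} (hδ : 0 < δ)
    (hA : MeasurableSet[ℱ s] A) (hA0 : μ A ≠ 0) :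
    μ (A ∩ {ω | ∫ u in s..T, |B u ω| < δ}) ≠ 0 := by
  obtain ⟨N, hN⟩ := exists_nat_measure_inter_le_ne_zero (fun ω => B s ω ^ 2) hA0
  have hAN : MeasurableSet[ℱ s] (A ∩ {ω | B s ω ^ 2 ≤ N}) :=
    hA.inter (measurableSet_le ((hB.adapted s).pow_const 2) measurable_const)
  obtain ⟨n, r, hr, hnr, hrδ⟩ := exists_nat_mul_sq_eq_and_mul_lt (sub_pos.2 hsT) hδ
    (N + (T - s) * (driftProb⁻¹ + 1))
  have hnT : s + n * r ^ 2 = T := by rw [hnr, add_sub_cancel]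
  obtain ⟨A', hA'A, -, hA'0, hA'⟩ :=
    hB.exists_subset_integral_abs_add_mul_sq_le_nat_mul hs hr hAN hN n hnT.le
  rw [hnT] at hA'
  suffices hsub : A' ⊆ A ∩ {ω | ∫ u in s..T, |B u ω| < δ} from
    fun hnull => hA'0 (measure_mono_null hsub hnull)
  refine fun ω hω => ⟨(hA'A hω).1, ?_⟩
  calc ∫ u in s..T, |B u ω|
      ≤ (∫ u in s..T, |B u ω|) + r * B T ω ^ 2 := le_add_of_nonneg_right (by positivity)
    _ ≤ r * B s ω ^ 2 + n * ((driftProb⁻¹ + 1) * r ^ 3) := hA' ω hω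
    _ ≤ r * N + n * ((driftProb⁻¹ + 1) * r ^ 3) := by gcongr; exact (hA'A hω).2
    _ = r * (N + (T - s) * (driftProb⁻¹ + 1)) := by rw [← hnr]; ring
    _ < δ := hrδ

end IsBrownianMotionOn

theorem brownian_integral_is_sticky_general {μ : Measure Ω} [IsFiniteMeasure μ]
    {ℱ : Filtration ℝ m0} {T : ℝ} {B : ℝ → Ω → ℝ} (hB : IsBrownianMotionOn μ ℱ T B) (s₀ : ℝ) :
    IsSticky μ ℱ T (Sproc s₀ B) := by
  intro t ht δ hδ
  simp_rw [fun ω => iSup_abs_Sproc_sub s₀ (hB.continuous ω) ht.2.le]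
  have hmeas : MeasurableSet {ω | ∫ u in t..T, |B u ω| < δ} :=
    ℱ.le T _ (measurableSet_lt
      (measurable_integral_abs_of_adapted hB.adapted hB.continuous ht.2.le) measurable_const)
  exact ae_pos_condExp_indicator (ℱ.le t) hmeas (measure_ne_top μ _) fun A hA hA0 =>
    hB.measure_inter_integral_abs_lt_ne_zero ht.1 ht.2 hδ hA hA0

end Brownian

/-- **Example (strictly increasing process).** Let `B` be a standard one-dimensional Brownian
motion with respect to the filtration `(F_t)_{t ∈ [0,T]}` (adapted and continuous, starting at
`0`, with increments `B_t − B_s` independent of `F_s` and Gaussian with mean `0` and variance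
`t − s`), and let `s₀ > 0`. Then the process `S_t := s₀ + ∫_0^t |B_s| ds`, `t ∈ [0,T]`, is
sticky: for every `t ∈ [0,T)` and every `δ > 0`,
`P[ sup_{u ∈ [t,T]} |S_u − S_t| < δ | F_t ] > 0` almost surely. -/
theorem brownian_integral_is_sticky
    {Ω : Type*} [m0 : MeasurableSpace Ω] (μ : Measure Ω) [IsProbabilityMeasure μ]
    (T : ℝ) (hT : 0 < T) (ℱ : Filtration ℝ m0)
    -- usual conditions: right-continuity and completeness, and `F_T = F`
    (hF_right : ∀ t : ℝ, (ℱ t : MeasurableSpace Ω) = ⨅ u ∈ Set.Ioi t, ℱ u)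
    (hF_complete : ∀ s : Set Ω, μ s = 0 → MeasurableSet[ℱ 0] s)
    (hF_T : (ℱ T : MeasurableSpace Ω) = m0)
    (B : ℝ → Ω → ℝ)
    (hB_adapted : Adapted ℱ B)
    (hB_cont : ∀ ω, Continuous fun t => B t ω)
    (hB_zero : ∀ ω, B 0 ω = 0)
    (hB_indep : ∀ s t : ℝ, 0 ≤ s → s ≤ t → t ≤ T →
      Indep (MeasurableSpace.comap (fun ω => B t ω - B s ω) (inferInstance : MeasurableSpace ℝ))
        (ℱ s) μ)
    (hB_gauss : ∀ s t : ℝ, 0 ≤ s → s ≤ t → t ≤ T →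
      μ.map (fun ω => B t ω - B s ω) = gaussianReal 0 (Real.toNNReal (t - s)))
    (s₀ : ℝ) (hs₀ : 0 < s₀) :
    ∀ t ∈ Set.Ico (0 : ℝ) T, ∀ δ > (0 : ℝ),
      ∀ᵐ ω ∂μ,
        0 < (μ[Set.indicator
              {ω' | (⨆ u : Set.Icc t T, |Sproc s₀ B (u : ℝ) ω' - Sproc s₀ B t ω'|) < δ}
              (fun _ => (1 : ℝ)) | ℱ t]) ω :=
  brownian_integral_is_sticky_general ⟨hB_adapted, hB_cont, hB_indep, hB_gauss⟩ s₀
end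
end
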